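/- arXiv:0807.1170 — 2 statements merged into one kernel-verified Lean document; each statement's English description precedes it below -/
import Mathlib

section
/- Let p be a prime, K a finite extension of ℚ_p, and let L = K(√d) and E = K(√e) be two non-K-isomorphic quadratic extensions of K inside a fixed algebraic closure (d, e ∈ K* non-squares, de ∉ (K*)²). Let LE be the compositum and fix a square root √e ∈ E of e. Then: (a) −e ∈ N_{L/K}(L*) if and only if −√e ∈ N_{LE/E}((LE)*); and (b) for every x ∈ K* with x(x² − e) ∈ N_{L/K}(L*), one has x ∈ N_{L/K}(L*) if and only if x − √e ∈ N_{LE/E}((LE)*). -/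
open Module

/-- `normGroup K L` is the set of norms `N_{L/K}(t)` of nonzero elements `t ∈ L`. -/
def normGroup (K L : Type*) [Field K] [Field L] [Algebra K L] : Set K :=
  {x : K | ∃ t : L, t ≠ 0 ∧ Algebra.norm K t = x}

/-!
For quadratic extensions `L = K(√d)` and `E = K(√e)` of a nonarchimedean local field `K`, an element
`t` of `E` is a norm from `LE` if and only if `N_{E/K}(t)` is a norm from `L`; the theorem is the
case `t = x - √e`, whose norm is `x² - e`.

One implication is an identity. For the other, both conditions on `t` define subgroups of `Eˣ`, and
the first has index two by the local norm index formula, so it suffices that the second is proper.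
Otherwise all norms from `E` are norms from `L`, so that `L` and `E` have the same norms, which the
symmetry `c ∈ N(K(√d)) ↔ d ∈ N(K(√c))` and the index formula forbid.

The index formula `[Kˣ : N(K(√d)ˣ)] = 2` is obtained by counting square classes: Hilbert 90 gives
`[Kˣ : Kˣ²]² = 2 [Lˣ : Lˣ²] [Kˣ : N Lˣ]`, while `[Fˣ : Fˣ²] = 4 [O_F : 2 O_F]` for every local field
`F`, and `[O_L : 2 O_L] = [O_K : 2 O_K]²`.
-/

section Index

lemma relIndex_zpowers_pow {G : Type*} [Group G] {g : G} (hg : ¬IsOfFinOrder g) (n : ℕ) :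
    (Subgroup.zpowers (g ^ n)).relIndex (Subgroup.zpowers g) = n := by
  have hinj : Function.Injective (zpowersHom G g) := injective_zpow_iff_not_isOfFinOrder.2 hg
  have hn : Subgroup.zpowers (g ^ n) =
      (AddSubgroup.zmultiples (n : ℤ)).toSubgroup.map (zpowersHom G g) := by
    rw [← zpow_natCast]
    exact (MonoidHom.map_zpowers (zpowersHom G g) (Multiplicative.ofAdd (n : ℤ))).symm
  rw [hn, ← Subgroup.range_zpowersHom, MonoidHom.range_eq_map,
    Subgroup.relIndex_map_map_of_injective _ _ hinj, Subgroup.relIndex_top_right,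
    AddSubgroup.index_toSubgroup, Int.index_zmultiples, Int.natAbs_natCast]

lemma eq_of_le_of_prime_index {G : Type*} [Group G] {H K : Subgroup G} (h : H ≤ K)
    (hH : H.index.Prime) (hK : K ≠ ⊤) : H = K := by
  have hmul := Subgroup.relIndex_mul_index h
  rcases (Nat.dvd_prime hH).1 (Dvd.intro_left _ hmul) with h1 | h2
  · exact absurd (Subgroup.index_eq_one.1 h1) hK
  · refine h.antisymm (Subgroup.relIndex_eq_one.1 (Nat.eq_of_mul_eq_mul_right hH.pos ?_))
    rw [one_mul, ← h2, hmul, h2]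

lemma relIndex_map_eq_of_le {A : Type*} [AddGroup A] {f : A →+ A} (hf : Function.Injective f)
    {U V : AddSubgroup A} (hUV : U ≤ V) (h0 : U.relIndex V ≠ 0) (hU : U.map f ≤ U)
    (hV : V.map f ≤ V) : (U.map f).relIndex U = (V.map f).relIndex V := by
  refine mul_right_cancel₀ h0 ?_
  calc (U.map f).relIndex U * U.relIndex V
    _ = (U.map f).relIndex V := AddSubgroup.relIndex_mul_relIndex _ _ _ hU hUV
    _ = (U.map f).relIndex (V.map f) * (V.map f).relIndex V :=
      (AddSubgroup.relIndex_mul_relIndex _ _ _ (AddSubgroup.map_mono hUV) hV).symm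
    _ = (V.map f).relIndex V * U.relIndex V := by
      rw [AddSubgroup.relIndex_map_map_of_injective U V hf, mul_comm]

lemma relIndex_map_eq_of_commensurable {A : Type*} [AddGroup A] {f : A →+ A}
    (hf : Function.Injective f) {U V : AddSubgroup A} (hUV : U.Commensurable V)
    (hU : U.map f ≤ U) (hV : V.map f ≤ V) : (U.map f).relIndex U = (V.map f).relIndex V := by
  have hinf : (U ⊓ V).map f ≤ U ⊓ V := (AddSubgroup.map_inf_le ..).trans (inf_le_inf hU hV)
  have hinfU : (U ⊓ V).relIndex U ≠ 0 := by rw [AddSubgroup.inf_relIndex_left]; exact hUV.2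
  have hinfV : (U ⊓ V).relIndex V ≠ 0 := by rw [AddSubgroup.inf_relIndex_right]; exact hUV.1
  rw [← relIndex_map_eq_of_le hf inf_le_left hinfU hinf hU,
    relIndex_map_eq_of_le hf inf_le_right hinfV hinf hV]

lemma relIndex_pi_const {ι A : Type*} [Fintype ι] [AddGroup A] (H K : AddSubgroup A) :
    (AddSubgroup.pi Set.univ fun _ : ι ↦ H).relIndex (AddSubgroup.pi Set.univ fun _ : ι ↦ K) =
      H.relIndex K ^ Fintype.card ι := by
  have hrange : (AddMonoidHom.compLeft K.subtype ι).range = AddSubgroup.pi Set.univ fun _ ↦ K := by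
    ext x
    rw [AddSubgroup.mem_pi]
    exact ⟨by rintro ⟨y, rfl⟩ i -; exact (y i).2, fun hx ↦ ⟨fun i ↦ ⟨x i, hx i trivial⟩, rfl⟩⟩
  rw [← hrange, ← AddSubgroup.index_comap]
  exact (AddSubgroup.index_pi fun _ : ι ↦ H.addSubgroupOf K).trans (Finset.prod_const _)

variable {G : Type*} [CommGroup G]

lemma relIndex_sup_of_disjoint {A B B' : Subgroup G} (hB : B' ≤ B) (h : Disjoint A B) :
    (A ⊔ B').relIndex (A ⊔ B) = B'.relIndex B := by
  have hsup : A ⊔ B = (A ⊔ B') ⊔ B := by rw [sup_assoc, sup_eq_right.2 hB]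
  have hinf : (A ⊔ B') ⊓ B = B' := by
    rw [sup_comm, sup_inf_assoc_of_le A hB, h.eq_bot, sup_bot_eq]
  rw [hsup, Subgroup.relIndex_sup_left, ← Subgroup.inf_relIndex_right, hinf]

lemma relIndex_sup_sup_of_disjoint {A A' B B' : Subgroup G} (hA : A' ≤ A) (hB : B' ≤ B)
    (h : Disjoint A B) :
    (A' ⊔ B').relIndex (A ⊔ B) = A'.relIndex A * B'.relIndex B := by
  rw [← Subgroup.relIndex_mul_relIndex _ (A' ⊔ B) _ (sup_le_sup_left hB _) (sup_le_sup_right hA _),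
    relIndex_sup_of_disjoint hB (h.mono_left hA), sup_comm A', sup_comm A,
    relIndex_sup_of_disjoint hA h.symm, mul_comm]

lemma index_range_eq_of_map_le {f : G →* G} {H : Subgroup G} (hf : H.map f ≤ H)
    (hH : H.index ≠ 0) : f.range.index = (H.map f).relIndex H * H.relIndex f.ker := by
  have hker : H.relIndex f.ker * (H ⊔ f.ker).index = H.index := by
    rw [← Subgroup.relIndex_sup_left, Subgroup.relIndex_mul_index le_sup_left]
  refine mul_left_cancel₀ (right_ne_zero_of_mul (hker.trans_ne hH)) ?_
  rw [← Subgroup.index_map, ← Subgroup.relIndex_mul_index hf, ← hker]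
  ring

end Index

section UnitBall

variable (E : Type*) [SeminormedAddCommGroup E] [IsUltrametricDist E]

/-- The additive subgroup of elements of norm at most one of an ultrametric normed group. -/
def unitBall : AddSubgroup E :=
  (IsUltrametricDist.closedBall_openAddSubgroup E one_pos).toAddSubgroup

variable {E}

lemma mem_unitBall {x : E} : x ∈ unitBall E ↔ ‖x‖ ≤ 1 := mem_closedBall_zero_iff

lemma isOpen_unitBall : IsOpen (unitBall E : Set E) :=
  IsUltrametricDist.isOpen_closedBall _ one_ne_zero

lemma isCompact_unitBall [ProperSpace E] : IsCompact (unitBall E : Set E) :=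
  isCompact_closedBall _ _

lemma unitBall_pi {ι : Type*} [Fintype ι] :
    unitBall (ι → E) = AddSubgroup.pi Set.univ fun _ ↦ unitBall E := by
  ext x
  simp only [mem_unitBall, AddSubgroup.mem_pi, Set.mem_univ, true_imp_iff]
  exact pi_norm_le_iff_of_nonneg zero_le_one

end UnitBall

lemma relIndex_ne_zero_of_isOpen_of_isCompact {A : Type*} [AddGroup A] [TopologicalSpace A]
    [IsTopologicalAddGroup A] {U V : AddSubgroup A} (hU : IsOpen (U : Set A))
    (hV : IsCompact (V : Set A)) : U.relIndex V ≠ 0 :=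
  have : CompactSpace V := isCompact_iff_compactSpace.mp hV
  have : Finite (V ⧸ U.addSubgroupOf V) :=
    (U.addSubgroupOf V).quotient_finite_of_isOpen (V.addSubgroupOf_isOpen U hU)
  AddSubgroup.index_ne_zero_of_finite

section Scaling

open scoped Pointwise

lemma smul_unitBall_le {𝕜 E : Type*} [NormedField 𝕜] [SeminormedAddCommGroup E] [NormedSpace 𝕜 E]
    [IsUltrametricDist E] {c : 𝕜} (hc : ‖c‖ ≤ 1) : c • unitBall E ≤ unitBall E := by
  rintro _ ⟨x, hx, rfl⟩
  exact mem_unitBall.2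
    ((norm_smul_le c x).trans (mul_le_one₀ hc (norm_nonneg x) (mem_unitBall.1 hx)))

lemma smul_pi_const {ι M A : Type*} [Monoid M] [AddGroup A] [DistribMulAction M A] (c : M)
    (U : AddSubgroup A) : c • (AddSubgroup.pi Set.univ fun _ : ι ↦ U) =
      AddSubgroup.pi Set.univ fun _ ↦ c • U := by
  ext x
  simp only [AddSubgroup.mem_smul_pointwise_iff_exists, AddSubgroup.mem_pi, Set.mem_univ,
    true_imp_iff]
  exact ⟨by rintro ⟨y, hy, rfl⟩ i; exact ⟨y i, hy i, rfl⟩,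
    fun h ↦ ⟨fun i ↦ (h i).choose, fun i ↦ (h i).choose_spec.1, funext fun i ↦ (h i).choose_spec.2⟩⟩

lemma mem_smul_unitBall {F : Type*} [NormedField F] [IsUltrametricDist F] {c x : F} :
    x ∈ c • unitBall F ↔ ‖x‖ ≤ ‖c‖ := by
  rw [AddSubgroup.mem_smul_pointwise_iff_exists]
  constructor
  · rintro ⟨y, hy, rfl⟩
    rw [norm_smul]
    exact mul_le_of_le_one_right (norm_nonneg _) (mem_unitBall.1 hy)
  · intro hx
    refine ⟨x / c, mem_unitBall.2 ?_, mul_div_cancel_of_imp' fun hc ↦ by simpa [hc] using hx⟩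
    rw [norm_div]
    exact div_le_one_of_le₀ hx (norm_nonneg _)

variable {K : Type*} [NontriviallyNormedField K] [IsUltrametricDist K] [ProperSpace K]

lemma relIndex_smul_unitBall_ne_zero {c : K} (hc : c ≠ 0) :
    (c • unitBall K).relIndex (unitBall K) ≠ 0 :=
  relIndex_ne_zero_of_isOpen_of_isCompact (isOpen_unitBall.smul₀ hc) isCompact_unitBall

lemma relIndex_smul_unitBall {V : Type*} [NormedAddCommGroup V] [NormedSpace K V]
    [IsUltrametricDist V] [FiniteDimensional K V] {c : K} (hc0 : c ≠ 0) (hc : ‖c‖ ≤ 1) :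
    (c • unitBall V).relIndex (unitBall V) =
      (c • unitBall K).relIndex (unitBall K) ^ finrank K V := by
  have : ProperSpace V := FiniteDimensional.proper K V
  let e : (Fin (finrank K V) → K) ≃L[K] V := .ofFinrankEq (finrank_fin_fun K)
  let B := unitBall (Fin (finrank K V) → K)
  have hsmul : c • B.map (e : _ →+ V) = (c • B).map (e : _ →+ V) := by
    ext x
    simp [AddSubgroup.mem_smul_pointwise_iff_exists]
  have hcomm : (unitBall V).Commensurable (B.map (e : _ →+ V)) :=
    ⟨relIndex_ne_zero_of_isOpen_of_isCompact isOpen_unitBall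
        (isCompact_unitBall.image e.continuous),
      relIndex_ne_zero_of_isOpen_of_isCompact (e.isOpenMap _ isOpen_unitBall) isCompact_unitBall⟩
  calc (c • unitBall V).relIndex (unitBall V)
    _ = (c • B.map (e : _ →+ V)).relIndex (B.map (e : _ →+ V)) :=
      relIndex_map_eq_of_commensurable (f := DistribSMul.toAddMonoidHom V c)
        (smul_right_injective V hc0) hcomm (smul_unitBall_le hc)
        (hsmul.trans_le (AddSubgroup.map_mono (smul_unitBall_le hc)))
    _ = (c • B).relIndex B := by
      rw [hsmul, AddSubgroup.relIndex_map_map_of_injective _ _ e.injective]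
    _ = (c • unitBall K).relIndex (unitBall K) ^ finrank K V := by
      simp only [B, unitBall_pi, smul_pi_const, relIndex_pi_const, Fintype.card_fin]

end Scaling

section CongruenceUnits

open scoped Pointwise

lemma norm_eq_one_of_norm_sub_one_lt {F : Type*} [NormedField F] [IsUltrametricDist F] {x : F}
    (hx : ‖x - 1‖ < 1) : ‖x‖ = 1 := by
  simpa [hx.le] using IsUltrametricDist.norm_add_eq_max_of_norm_ne_norm (x := x - 1) (y := 1)
    (by rw [norm_one]; exact hx.ne)

lemma norm_mul_lt_one {F : Type*} [NormedField F] {x y : F} (hx : ‖x‖ ≤ 1) (hy : ‖y‖ < 1) :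
    ‖x * y‖ < 1 := by
  rw [norm_mul]
  exact mul_lt_one_of_nonneg_of_lt_one_right hx (norm_nonneg y) hy

variable {F : Type*} [NormedField F] [IsUltrametricDist F]

/-- The subgroup `1 + cO ∩ Oˣ` of units congruent to one modulo `c`, where `O` is the ring of
elements of norm at most one. -/
def congruenceUnits (c : F) : Subgroup Fˣ where
  carrier := {u | ‖(u : F)‖ = 1 ∧ ‖(u : F) - 1‖ ≤ ‖c‖}
  one_mem' := by simp
  mul_mem' := by
    rintro u v ⟨hu, hu'⟩ ⟨hv, hv'⟩
    have h : (u : F) * v - 1 = u * (v - 1) + (u - 1) := by ring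
    simp only [Set.mem_ofPred_eq, Units.val_mul, norm_mul, hu, hv, mul_one, true_and, h]
    refine (IsUltrametricDist.norm_add_le_max _ _).trans (max_le ?_ hu')
    rwa [norm_mul, hu, one_mul]
  inv_mem' := by
    rintro u ⟨hu, hu'⟩
    have h : (u : F)⁻¹ - 1 = -((u : F)⁻¹ * (u - 1)) := by
      rw [mul_sub, inv_mul_cancel₀ u.ne_zero]
      ring
    simp only [Set.mem_ofPred_eq, Units.val_inv_eq_inv_val, norm_inv, hu, inv_one, true_and, h]
    rwa [norm_neg, norm_mul, norm_inv, hu, inv_one, one_mul]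

lemma mem_congruenceUnits {c : F} (hc : ‖c‖ < 1) {u : Fˣ} :
    u ∈ congruenceUnits c ↔ ‖(u : F) - 1‖ ≤ ‖c‖ :=
  and_iff_right_of_imp fun h ↦ norm_eq_one_of_norm_sub_one_lt (h.trans_lt hc)

lemma congruenceUnits_le_of_norm_le {b c : F} (h : ‖b‖ ≤ ‖c‖) :
    congruenceUnits b ≤ congruenceUnits c :=
  fun _ hu ↦ ⟨hu.1, hu.2.trans h⟩

lemma isOpen_congruenceUnits {c : F} (hc : c ≠ 0) : IsOpen (congruenceUnits c : Set Fˣ) := by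
  have h : (congruenceUnits c : Set Fˣ) =
      Units.val ⁻¹' (Metric.sphere (0 : F) 1 ∩ Metric.closedBall 1 ‖c‖) := by
    ext u
    simp only [Set.mem_preimage, Set.mem_inter_iff, mem_sphere_zero_iff_norm,
      mem_closedBall_iff_norm]
    rfl
  rw [h]
  exact ((IsUltrametricDist.isOpen_sphere _ one_ne_zero).inter
    (IsUltrametricDist.isOpen_closedBall _ (norm_ne_zero_iff.2 hc))).preimage Units.continuous_val

lemma norm_sub_one_div_le {c : F} {u : Fˣ} (hu : u ∈ congruenceUnits c) :
    ‖((u : F) - 1) / c‖ ≤ 1 := by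
  rw [norm_div]
  exact div_le_one_of_le₀ hu.2 (norm_nonneg c)

/-- The homomorphism `1 + c * x ↦ x` from the units congruent to one modulo `c` to the additive
group of `F` modulo `m * O`, where `O` is the ring of elements of norm at most one. -/
def congruenceUnitsMod {c m : F} (hc : c ≠ 0) (hcm : ‖c‖ ≤ ‖m‖) :
    congruenceUnits c →* Multiplicative (F ⧸ m • unitBall F) :=
  MonoidHom.mk' (fun u ↦ .ofAdd (QuotientAddGroup.mk (((u : Fˣ) - 1) / c))) fun u v ↦ by
    rw [← ofAdd_add, ← QuotientAddGroup.mk_add, EmbeddingLike.apply_eq_iff_eq, eq_comm,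
      QuotientAddGroup.eq, mem_smul_unitBall]
    have h : -(((u : Fˣ) - 1) / c + ((v : Fˣ) - 1) / c) +
        (((u * v : congruenceUnits c) : Fˣ) - 1) / c =
          c * ((((u : Fˣ) : F) - 1) / c * (((v : Fˣ) - 1) / c)) := by
      push_cast
      field_simp
      ring
    rw [h, norm_mul, norm_mul (_ / c)]
    exact (mul_le_of_le_one_right (norm_nonneg c) (mul_le_one₀ (norm_sub_one_div_le u.2)
      (norm_nonneg _) (norm_sub_one_div_le v.2))).trans hcm

lemma ker_congruenceUnitsMod {c m : F} (hc0 : c ≠ 0) (hc : ‖c‖ < 1) (hcm : ‖c‖ ≤ ‖m‖)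
    (hm : ‖m‖ ≤ 1) : (congruenceUnitsMod hc0 hcm).ker =
      (congruenceUnits (m * c)).subgroupOf (congruenceUnits c) := by
  have hmc : ‖m * c‖ < 1 := norm_mul_lt_one hm hc
  ext u
  rw [MonoidHom.mem_ker, Subgroup.mem_subgroupOf, mem_congruenceUnits hmc, norm_mul,
    ← div_le_iff₀ (norm_pos_iff.2 hc0), ← norm_div, ← mem_smul_unitBall]
  exact QuotientAddGroup.eq_zero_iff _

lemma range_congruenceUnitsMod {c m : F} (hc0 : c ≠ 0) (hc : ‖c‖ < 1) (hcm : ‖c‖ ≤ ‖m‖) :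
    (congruenceUnitsMod hc0 hcm).range =
      ((unitBall F).map (QuotientAddGroup.mk' (m • unitBall F))).toSubgroup := by
  ext y
  constructor
  · rintro ⟨u, rfl⟩
    exact ⟨_, mem_unitBall.2 (norm_sub_one_div_le u.2), rfl⟩
  · rintro ⟨x, hx, rfl⟩
    have hx' : ‖(1 + c * x) - 1‖ ≤ ‖c‖ := by
      rw [add_sub_cancel_left, norm_mul]
      exact mul_le_of_le_one_right (norm_nonneg c) (mem_unitBall.1 hx)
    have hne : 1 + c * x ≠ 0 :=
      norm_pos_iff.1 (zero_lt_one.trans_eq (norm_eq_one_of_norm_sub_one_lt (hx'.trans_lt hc)).symm)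
    refine ⟨⟨Units.mk0 _ hne, (mem_congruenceUnits hc).2 hx'⟩, ?_⟩
    exact congrArg QuotientAddGroup.mk (by simp [hc0] : (1 + c * x - 1) / c = x)

lemma relIndex_congruenceUnits {c m : F} (hc0 : c ≠ 0) (hc : ‖c‖ < 1) (hcm : ‖c‖ ≤ ‖m‖)
    (hm : ‖m‖ ≤ 1) : (congruenceUnits (m * c)).relIndex (congruenceUnits c) =
      (m • unitBall F).relIndex (unitBall F) := by
  calc (congruenceUnits (m * c)).relIndex (congruenceUnits c)
    _ = Nat.card (congruenceUnitsMod hc0 hcm).range := by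
      rw [Subgroup.relIndex, ← ker_congruenceUnitsMod hc0 hc hcm hm, Subgroup.index_ker]
    _ = Nat.card ((unitBall F).map (QuotientAddGroup.mk' (m • unitBall F))) := by
      rw [range_congruenceUnitsMod hc0 hc hcm]
      rfl
    _ = (m • unitBall F).relIndex (unitBall F) := by
      rw [← AddSubgroup.relIndex_ker, QuotientAddGroup.ker_mk']

lemma exists_sq_add_self_eq [CompleteSpace F] {w : F} (hw : ‖w‖ < 1) :
    ∃ y : F, y ^ 2 + y = w ∧ ‖y‖ ≤ ‖w‖ := by
  let s : Set F := Metric.closedBall 0 ‖w‖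
  let f : F → F := fun y ↦ w - y ^ 2
  have hf : Set.MapsTo f s s := by
    intro y hy
    simp only [s, mem_closedBall_zero_iff, f] at *
    rw [sub_eq_add_neg]
    refine (IsUltrametricDist.norm_add_le_max _ _).trans (max_le le_rfl ?_)
    rw [norm_neg, norm_pow]
    exact (pow_le_of_le_one (norm_nonneg y) (hy.trans hw.le) two_ne_zero).trans hy
  have hc : ContractingWith ⟨‖w‖, norm_nonneg w⟩ (hf.restrict f s s) := by
    refine ⟨by exact_mod_cast hw, LipschitzWith.of_dist_le_mul ?_⟩
    rintro ⟨x, hx⟩ ⟨y, hy⟩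
    simp only [s, mem_closedBall_zero_iff] at hx hy
    simp only [Subtype.dist_eq, Set.MapsTo.val_restrict_apply, f, dist_eq_norm]
    rw [show w - x ^ 2 - (w - y ^ 2) = -(x + y) * (x - y) by ring, norm_mul, norm_neg]
    exact mul_le_mul_of_nonneg_right
      ((IsUltrametricDist.norm_add_le_max _ _).trans (max_le hx hy)) (norm_nonneg _)
  obtain ⟨y, hys, hy, -⟩ := hc.exists_fixedPoint' Metric.isClosed_closedBall.isComplete hf
    (x := 0) (by simp [s]) (edist_ne_top _ _)
  exact ⟨y, (sub_eq_iff_eq_add'.1 hy).symm, by simpa [s] using hys⟩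

lemma norm_two_le_one : ‖(2 : F)‖ ≤ 1 := by
  exact_mod_cast IsUltrametricDist.norm_natCast_le_one F 2

lemma norm_four_mul_lt_one {t : F} (ht : ‖t‖ < 1) : ‖4 * t‖ < 1 :=
  norm_mul_lt_one (by exact_mod_cast IsUltrametricDist.norm_natCast_le_one F 4) ht

lemma norm_four_mul_lt_norm_two [NeZero (2 : F)] {t : F} (ht : ‖t‖ < 1) : ‖4 * t‖ < ‖(2 : F)‖ := by
  have h2 : 0 < ‖(2 : F)‖ := norm_pos_iff.2 two_ne_zero
  rw [show 4 * t = 2 * (2 * t) by ring, norm_mul]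
  exact mul_lt_of_lt_one_right h2 (norm_mul_lt_one norm_two_le_one ht)

lemma exists_one_add_two_mul_sq_eq [CompleteSpace F] [NeZero (2 : F)] {u : F}
    (hu : ‖u - 1‖ < ‖(4 : F)‖) : ∃ y : F, (1 + 2 * y) ^ 2 = u ∧ ‖4 * y‖ ≤ ‖u - 1‖ := by
  -- `(1 + 2 * y) ^ 2 = u` amounts to `y ^ 2 + y = (u - 1) / 4`.
  have h4 : (4 : F) ≠ 0 := norm_pos_iff.1 ((norm_nonneg _).trans_lt hu)
  have hw : ‖(u - 1) / 4‖ < 1 := by rwa [norm_div, div_lt_one (norm_pos_iff.2 h4)]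
  obtain ⟨y, hy, hyn⟩ := exists_sq_add_self_eq hw
  refine ⟨y, by linear_combination 4 * hy + mul_div_cancel₀ (u - 1) h4, ?_⟩
  rwa [norm_mul, mul_comm, ← le_div_iff₀ (norm_pos_iff.2 h4), ← norm_div]

lemma map_sq_congruenceUnits [CompleteSpace F] [NeZero (2 : F)] {t : F} (ht : ‖t‖ < 1) :
    (congruenceUnits (4 * t)).map (powMonoidHom 2) = congruenceUnits (2 * (4 * t)) := by
  have h2 : 0 < ‖(2 : F)‖ := norm_pos_iff.2 two_ne_zero
  have h2t : ‖2 * t‖ < 1 := norm_mul_lt_one norm_two_le_one ht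
  have h4t : ‖4 * t‖ < 1 := norm_four_mul_lt_one ht
  have h8t : ‖2 * (4 * t)‖ < 1 := norm_mul_lt_one norm_two_le_one h4t
  have h4 : ‖(4 : F)‖ = ‖(2 : F)‖ * ‖(2 : F)‖ := by rw [← norm_mul]; norm_num
  ext u
  simp only [Subgroup.mem_map, mem_congruenceUnits h4t, mem_congruenceUnits h8t, powMonoidHom_apply]
  constructor
  · rintro ⟨v, hv, rfl⟩
    rw [show ((v ^ 2 : Fˣ) : F) - 1 = (2 + (v - 1)) * (v - 1) by push_cast; ring, norm_mul,
      norm_mul 2]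
    exact mul_le_mul ((IsUltrametricDist.norm_add_le_max _ _).trans
      (max_le le_rfl (hv.trans (norm_four_mul_lt_norm_two ht).le))) hv (norm_nonneg _)
      (norm_nonneg _)
  · intro hu
    rw [show 2 * (4 * t) = 4 * (2 * t) by ring, norm_mul] at hu
    obtain ⟨y, hsq, hy⟩ := exists_one_add_two_mul_sq_eq
      (hu.trans_lt (mul_lt_of_lt_one_right (by rw [h4]; positivity) h2t))
    have hne : 1 + 2 * y ≠ 0 := fun h ↦ u.ne_zero (by rw [← hsq, h, zero_pow two_ne_zero])
    refine ⟨Units.mk0 _ hne, ?_, Units.ext (by simpa using hsq)⟩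
    rw [Units.val_mk0, add_sub_cancel_left]
    have := hy.trans hu
    simp only [norm_mul, h4] at this ⊢
    exact le_of_mul_le_mul_left (by linarith) h2

end CongruenceUnits

section IndexSquare

open scoped Pointwise

lemma index_ne_zero_of_isOpen_of_isCompact {G : Type*} [Group G] [TopologicalSpace G]
    [IsTopologicalGroup G] {H : Subgroup G} (hH : IsOpen (H : Set G)) {C : Set G} (hC : IsCompact C)
    (hcover : ∀ g, ∃ h ∈ H, g * h ∈ C) : H.index ≠ 0 := by
  have : DiscreteTopology (G ⧸ H) := QuotientGroup.discreteTopology hH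
  have hsurj : (QuotientGroup.mk : G → G ⧸ H) '' C = Set.univ := by
    refine Set.eq_univ_of_forall fun q ↦ ?_
    obtain ⟨g, rfl⟩ := QuotientGroup.mk_surjective q
    obtain ⟨h, hh, hgh⟩ := hcover g
    exact ⟨g * h, hgh, QuotientGroup.mk_mul_of_mem g hh⟩
  have : Finite (G ⧸ H) := Set.finite_univ_iff.1
    (hsurj ▸ (hC.image QuotientGroup.continuous_mk).finite_of_discrete)
  exact Subgroup.index_ne_zero_of_finite

lemma isCompact_units_annulus {F : Type*} [NormedField F] [ProperSpace F] {r : ℝ} (hr : 0 < r) :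
    IsCompact {u : Fˣ | r ≤ ‖(u : F)‖ ∧ ‖(u : F)‖ ≤ 1} := by
  have h : Units.val '' {u : Fˣ | r ≤ ‖(u : F)‖ ∧ ‖(u : F)‖ ≤ 1} =
      Metric.closedBall (0 : F) 1 \ Metric.ball 0 r := by
    ext x
    simp only [Set.mem_image, Set.mem_ofPred_eq, Set.mem_sdiff, mem_closedBall_zero_iff,
      mem_ball_zero_iff, not_lt]
    exact ⟨by rintro ⟨u, hu, rfl⟩; exact hu.symm, fun hx ↦
      ⟨Units.mk0 x (norm_pos_iff.1 (hr.trans_le hx.2)), hx.symm, rfl⟩⟩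
  rw [Units.isEmbedding_val₀.isCompact_iff, h]
  exact (isCompact_closedBall _ _).diff Metric.isOpen_ball

lemma exists_zpow_mul_mem_annulus {F : Type*} [NormedField F] {t : Fˣ} (ht : ‖(t : F)‖ < 1)
    (u : Fˣ) : ∃ k : ℤ, ‖(t : F)‖ ≤ ‖((u * t ^ k : Fˣ) : F)‖ ∧ ‖((u * t ^ k : Fˣ) : F)‖ ≤ 1 := by
  have ht0 : 0 < ‖(t : F)‖ := norm_pos_iff.2 t.ne_zero
  obtain ⟨n, hn, hn'⟩ := exists_mem_Ioc_zpow (norm_pos_iff.2 u.ne_zero) ((one_lt_inv₀ ht0).2 ht)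
  rw [inv_zpow, inv_lt_iff_one_lt_mul₀ (zpow_pos ht0 n)] at hn
  rw [inv_zpow, ← one_div, le_div_iff₀ (zpow_pos ht0 _)] at hn'
  refine ⟨n + 1, ?_, ?_⟩ <;>
    rw [Units.val_mul, Units.val_zpow_eq_zpow_val, norm_mul, norm_zpow]
  · rw [zpow_add_one₀ ht0.ne', ← mul_assoc]
    exact le_mul_of_one_le_left ht0.le hn.le
  · exact hn'

lemma norm_zpow_eq_one_iff {F : Type*} [NormedField F] {t : Fˣ} (ht : ‖(t : F)‖ < 1) {k : ℤ} :
    ‖((t ^ k : Fˣ) : F)‖ = 1 ↔ k = 0 := by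
  rw [Units.val_zpow_eq_zpow_val, norm_zpow, zpow_eq_one_iff_right₀ (norm_nonneg _) ht.ne]

lemma not_isOfFinOrder_of_norm_lt_one {F : Type*} [NormedField F] {t : Fˣ} (ht : ‖(t : F)‖ < 1) :
    ¬IsOfFinOrder t := by
  rw [isOfFinOrder_iff_zpow_eq_one]
  rintro ⟨k, hk, h⟩
  exact hk ((norm_zpow_eq_one_iff ht).1 (by rw [h, Units.val_one, norm_one]))

lemma four_mul_ne_zero {F : Type*} [Field F] [NeZero (2 : F)] {t : F} (ht : t ≠ 0) :
    4 * t ≠ 0 := by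
  rw [show (4 : F) = 2 * 2 by norm_num]
  exact mul_ne_zero (mul_ne_zero two_ne_zero two_ne_zero) ht

section Ultrametric

variable {F : Type*} [NormedField F] [IsUltrametricDist F] {t : Fˣ}

lemma disjoint_zpowers_congruenceUnits (ht : ‖(t : F)‖ < 1) (c : F) :
    Disjoint (Subgroup.zpowers t) (congruenceUnits c) := by
  rw [Subgroup.disjoint_def]
  rintro _ ⟨k, rfl⟩ hk
  exact (norm_zpow_eq_one_iff ht).1 hk.1 ▸ zpow_zero t

lemma mem_congruenceUnits_of_norm_eq_one (ht : ‖(t : F)‖ < 1) {c : F} {u : Fˣ}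
    (hu : u ∈ Subgroup.zpowers t ⊔ congruenceUnits c) (hu1 : ‖(u : F)‖ = 1) :
    u ∈ congruenceUnits c := by
  obtain ⟨_, ⟨k, rfl⟩, v, hv, rfl⟩ := Subgroup.mem_sup.1 hu
  have hk : ‖((t ^ k : Fˣ) : F)‖ = 1 := by simpa [hv.1] using hu1
  simpa [(norm_zpow_eq_one_iff ht).1 hk] using hv

lemma index_zpowers_sup_congruenceUnits_ne_zero [ProperSpace F] (ht : ‖(t : F)‖ < 1) {c : F}
    (hc : c ≠ 0) : (Subgroup.zpowers t ⊔ congruenceUnits c).index ≠ 0 := by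
  refine index_ne_zero_of_isOpen_of_isCompact
    (Subgroup.isOpen_mono le_sup_right (isOpen_congruenceUnits hc))
    (isCompact_units_annulus (norm_pos_iff.2 t.ne_zero)) fun u ↦ ?_
  obtain ⟨k, hk⟩ := exists_zpow_mul_mem_annulus ht u
  exact ⟨t ^ k, Subgroup.mem_sup_left (Subgroup.zpow_mem_zpowers t k), hk⟩

variable [NeZero (2 : F)]

lemma neg_one_notMem_zpowers_sup_congruenceUnits (ht : ‖(t : F)‖ < 1) :
    -1 ∉ Subgroup.zpowers t ⊔ congruenceUnits (4 * (t : F)) := by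
  intro h
  have h2 := (mem_congruenceUnits_of_norm_eq_one ht h (by simp)).2
  rw [Units.val_neg, Units.val_one, ← neg_add', one_add_one_eq_two, norm_neg] at h2
  exact h2.not_gt (norm_four_mul_lt_norm_two ht)

lemma relIndex_zpowers_sup_congruenceUnits_ker_sq (ht : ‖(t : F)‖ < 1) :
    (Subgroup.zpowers t ⊔ congruenceUnits (4 * (t : F))).relIndex
      (powMonoidHom 2 : Fˣ →* Fˣ).ker = 2 := by
  have hneg := neg_one_notMem_zpowers_sup_congruenceUnits ht
  have hker {u : Fˣ} : u ∈ (powMonoidHom 2 : Fˣ →* Fˣ).ker ↔ u = 1 ∨ u = -1 := by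
    simp only [MonoidHom.mem_ker, powMonoidHom_apply, Units.ext_iff, Units.val_pow_eq_pow_val,
      Units.val_neg, Units.val_one, sq_eq_one_iff]
  rw [Subgroup.relIndex_eq_two_iff_exists_notMem_and]
  refine ⟨-1, hker.2 (.inr rfl), hneg, fun u hu ↦ ?_⟩
  rcases hker.1 hu with rfl | rfl
  · exact .inr (one_mem _)
  · exact .inl (by simp)

lemma relIndex_map_sq_zpowers_sup_congruenceUnits [CompleteSpace F] (ht : ‖(t : F)‖ < 1) :
    ((Subgroup.zpowers t ⊔ congruenceUnits (4 * (t : F))).map (powMonoidHom 2)).relIndex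
      (Subgroup.zpowers t ⊔ congruenceUnits (4 * (t : F))) =
        2 * ((2 : F) • unitBall F).relIndex (unitBall F) := by
  rw [Subgroup.map_sup, MonoidHom.map_zpowers, map_sq_congruenceUnits ht, powMonoidHom_apply,
    relIndex_sup_sup_of_disjoint, relIndex_zpowers_pow (not_isOfFinOrder_of_norm_lt_one ht),
    relIndex_congruenceUnits (four_mul_ne_zero t.ne_zero) (norm_four_mul_lt_one ht)
      (norm_four_mul_lt_norm_two ht).le norm_two_le_one]
  · exact Subgroup.zpowers_le.2 (pow_mem (Subgroup.mem_zpowers t) 2)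
  · refine congruenceUnits_le_of_norm_le ?_
    rw [norm_mul]
    exact mul_le_of_le_one_left (norm_nonneg _) norm_two_le_one
  · exact disjoint_zpowers_congruenceUnits ht _

end Ultrametric

theorem index_square {F : Type*} [NontriviallyNormedField F] [IsUltrametricDist F] [ProperSpace F]
    [NeZero (2 : F)] :
    (Subgroup.square Fˣ).index = 4 * ((2 : F) • unitBall F).relIndex (unitBall F) := by
  obtain ⟨t, ht0, ht⟩ := NormedField.exists_norm_lt_one F
  lift t to Fˣ using (norm_pos_iff.1 ht0).isUnit
  have hsquare : Subgroup.square Fˣ = (powMonoidHom 2 : Fˣ →* Fˣ).range := by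
    ext u
    rw [Subgroup.mem_square, isSquare_iff_exists_sq]
    exact exists_congr fun _ ↦ eq_comm
  rw [hsquare, index_range_eq_of_map_le
      (Subgroup.map_le_iff_le_comap.2 fun _ h ↦ pow_mem h 2)
      (index_zpowers_sup_congruenceUnits_ne_zero ht (four_mul_ne_zero t.ne_zero)),
    relIndex_map_sq_zpowers_sup_congruenceUnits ht,
    relIndex_zpowers_sup_congruenceUnits_ker_sq ht]
  ring

end IndexSquare

section QuadraticNorms

open QuadraticAlgebra

/-- The subgroup of units of `R` of the form `a ^ 2 - d * b ^ 2`, that is, of the norms of units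
from the quadratic algebra `R[X]/(X ^ 2 - d)`. -/
def quadNorms {R : Type*} [CommRing R] (d : R) : Subgroup Rˣ :=
  (Units.map (norm : QuadraticAlgebra R d 0 →* R)).range

lemma mem_quadNorms {R : Type*} [CommRing R] {d : R} {u : Rˣ} :
    u ∈ quadNorms d ↔ ∃ a b : R, (u : R) = a ^ 2 - d * b ^ 2 := by
  constructor
  · rintro ⟨z, rfl⟩
    refine ⟨(z : QuadraticAlgebra R d 0).re, (z : QuadraticAlgebra R d 0).im, ?_⟩
    rw [Units.coe_map, norm_def]
    ring
  · rintro ⟨a, b, h⟩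
    have hz : norm (⟨a, b⟩ : QuadraticAlgebra R d 0) = u := by
      rw [h, norm_def]
      ring
    exact ⟨(isUnit_iff_norm_isUnit.2 (hz ▸ u.isUnit)).unit, Units.ext hz⟩

lemma square_le_quadNorms {R : Type*} [CommRing R] (d : R) : Subgroup.square Rˣ ≤ quadNorms d := by
  rintro _ ⟨u, rfl⟩
  exact mem_quadNorms.2 ⟨u, 0, by push_cast; ring⟩

lemma map_norm_mem_quadNorms {R : Type*} [CommRing R] {d e : R} {z : (QuadraticAlgebra R e 0)ˣ}
    (hz : z ∈ quadNorms (algebraMap R (QuadraticAlgebra R e 0) d)) :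
    Units.map norm z ∈ quadNorms d := by
  -- `N (A ^ 2 - d * B ^ 2) = (N A + d * N B) ^ 2 - d * Tr (A * star B) ^ 2`
  obtain ⟨A, B, h⟩ := mem_quadNorms.1 hz
  refine mem_quadNorms.2 ⟨norm A + d * norm B, 2 * (A.re * B.re - e * (A.im * B.im)), ?_⟩
  rw [Units.coe_map, h]
  simp only [norm_def, sq, re_sub, im_sub, re_mul, im_mul, algebraMap_re, algebraMap_im]
  ring

variable {K : Type*} [Field K]

lemma isSquare_units_iff {u : Kˣ} : IsSquare u ↔ IsSquare (u : K) := by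
  refine ⟨fun h ↦ h.map (Units.coeHom K), ?_⟩
  rintro ⟨r, hr⟩
  have hr0 : r ≠ 0 := left_ne_zero_of_mul (hr.symm.trans_ne u.ne_zero)
  exact ⟨Units.mk0 r hr0, Units.ext hr⟩

lemma fact_sq_ne_of_not_isSquare {d : K} (hd : ¬IsSquare d) : Fact (∀ r : K, r ^ 2 ≠ d + 0 * r) :=
  ⟨fun r h ↦ hd ⟨r, by linear_combination -h⟩⟩

lemma mem_quadNorms_symm [NeZero (2 : K)] {c d : Kˣ} (hc : ¬IsSquare (c : K))
    (h : c ∈ quadNorms (d : K)) : d ∈ quadNorms (c : K) := by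
  obtain ⟨a, b, hab⟩ := mem_quadNorms.1 h
  have hb : b ≠ 0 := fun hb ↦ hc ⟨a, by rw [hab, hb]; ring⟩
  refine mem_quadNorms.2 ⟨a / b, 1 / b, ?_⟩
  field_simp
  linear_combination hab

lemma isSquare_algebraMap_iff [NeZero (2 : K)] {d x : K} (hd : d ≠ 0) :
    IsSquare (algebraMap K (QuadraticAlgebra K d 0) x) ↔ IsSquare x ∨ IsSquare (d * x) := by
  constructor
  · rintro ⟨w, hw⟩
    have hre : x = w.re * w.re + d * (w.im * w.im) := by
      simpa [mul_assoc] using congrArg re hw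
    have him : w.re = 0 ∨ w.im = 0 := by
      have h : 0 = w.re * w.im + w.im * w.re := by simpa using congrArg im hw
      exact mul_eq_zero.1 ((mul_eq_zero_iff_left two_ne_zero).1
        (show 2 * (w.re * w.im) = 0 by linear_combination -h))
    rcases him with h | h
    · exact .inr ⟨d * w.im, by rw [hre, h]; ring⟩
    · exact .inl ⟨w.re, by rw [hre, h]; ring⟩
  · rintro (h | ⟨s, hs⟩)
    · exact h.map _
    · refine ⟨⟨0, s / d⟩, ?_⟩
      have hx : x = d * (s / d) * (s / d) := by
        field_simp
        linear_combination hs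
      ext <;> simp [hx]

lemma not_isSquare_algebraMap [NeZero (2 : K)] {d e : K} (hd : ¬IsSquare d) (he : ¬IsSquare e)
    (hde : ¬IsSquare (d * e)) : ¬IsSquare (algebraMap K (QuadraticAlgebra K e 0) d) := by
  rw [isSquare_algebraMap_iff (by rintro rfl; exact he IsSquare.zero), mul_comm]
  exact not_or_intro hd hde

lemma add_algebraMap_sq_of_norm_eq_sq {d c : K} {z : QuadraticAlgebra K d 0} (h : norm z = c ^ 2) :
    (z + algebraMap K _ c) ^ 2 = z * algebraMap K _ (2 * (z.re + c)) := by
  rw [norm_def] at h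
  ext <;> simp only [sq, re_mul, im_mul, re_add, im_add, algebraMap_re, algebraMap_im]
  · linear_combination -h
  · ring

lemma mem_square_sup_range_of_norm_eq_sq [NeZero (2 : K)] {d : K} (hd : d ≠ 0)
    {z : (QuadraticAlgebra K d 0)ˣ} {c : K} (h : norm (z : QuadraticAlgebra K d 0) = c ^ 2) :
    z ∈ Subgroup.square (QuadraticAlgebra K d 0)ˣ ⊔
      (Units.map (algebraMap K (QuadraticAlgebra K d 0)).toMonoidHom).range := by
  by_cases hre : z.val.re + c = 0
  · have him : z.val.im = 0 := by
      rw [norm_def, eq_neg_of_add_eq_zero_left hre] at h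
      simpa [← sq, hd] using h
    have hz : (z : QuadraticAlgebra K d 0) = algebraMap K _ z.val.re := QuadraticAlgebra.ext rfl him
    have hz0 : z.val.re ≠ 0 := fun h0 ↦ z.ne_zero (by rw [hz, h0, map_zero])
    exact Subgroup.mem_sup_right ⟨Units.mk0 _ hz0, Units.ext hz.symm⟩
  · let t : Kˣ := Units.mk0 _ (mul_ne_zero two_ne_zero hre)
    have hw := add_algebraMap_sq_of_norm_eq_sq h
    have hunit : IsUnit (z.val + algebraMap K _ c) := by
      rw [← isUnit_pow_iff two_ne_zero, hw]
      exact z.isUnit.mul (t.isUnit.map (algebraMap K _))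
    have ht : Units.map (algebraMap K (QuadraticAlgebra K d 0)).toMonoidHom t ∈
        (Units.map (algebraMap K (QuadraticAlgebra K d 0)).toMonoidHom).range := ⟨t, rfl⟩
    refine (Subgroup.mul_mem_cancel_right _ (Subgroup.mem_sup_right ht)).1
      (Subgroup.mem_sup_left ⟨hunit.unit, Units.ext ?_⟩)
    exact hw.symm.trans (sq _)

lemma comap_norm_square [NeZero (2 : K)] {d : K} (hd : d ≠ 0) :
    (Subgroup.square Kˣ).comap (Units.map (norm : QuadraticAlgebra K d 0 →* K)) =
      Subgroup.square (QuadraticAlgebra K d 0)ˣ ⊔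
        (Units.map (algebraMap K (QuadraticAlgebra K d 0)).toMonoidHom).range := by
  refine le_antisymm ?_ (sup_le ?_ ?_)
  · rintro z ⟨c, hc⟩
    exact mem_square_sup_range_of_norm_eq_sq hd ((congrArg Units.val hc).trans (sq (c : K)).symm)
  · rintro _ ⟨w, rfl⟩
    exact ⟨_, map_mul _ w w⟩
  · rintro _ ⟨c, rfl⟩
    exact ⟨c, Units.ext ((norm_algebraMap (c : K)).trans (sq _))⟩

lemma relIndex_comap_algebraMap_square [NeZero (2 : K)] {d : K} (hd : ¬IsSquare d) :
    (Subgroup.square Kˣ).relIndex ((Subgroup.square (QuadraticAlgebra K d 0)ˣ).comap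
      (Units.map (algebraMap K (QuadraticAlgebra K d 0)).toMonoidHom)) = 2 := by
  have hd0 : d ≠ 0 := fun h ↦ hd (h ▸ IsSquare.zero)
  have : Fact (∀ r : K, r ^ 2 ≠ d + 0 * r) := fact_sq_ne_of_not_isSquare hd
  have hcomap {u : Kˣ} : u ∈ (Subgroup.square (QuadraticAlgebra K d 0)ˣ).comap
      (Units.map (algebraMap K (QuadraticAlgebra K d 0)).toMonoidHom) ↔
        IsSquare (u : K) ∨ IsSquare (d * u) :=
    isSquare_units_iff.trans (isSquare_algebraMap_iff hd0)
  rw [Subgroup.relIndex_eq_two_iff_exists_notMem_and]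
  refine ⟨Units.mk0 d hd0, hcomap.2 (.inr ⟨d, rfl⟩), fun h ↦ hd (isSquare_units_iff.1 h),
    fun u hu ↦ (hcomap.1 hu).symm.imp (fun h ↦ ?_) isSquare_units_iff.2⟩
  rw [mul_comm]
  exact isSquare_units_iff.2 h

theorem index_square_sq_eq [NeZero (2 : K)] {d : K} (hd : ¬IsSquare d) :
    (Subgroup.square Kˣ).index ^ 2 =
      2 * (Subgroup.square (QuadraticAlgebra K d 0)ˣ).index * (quadNorms d).index := by
  have hd0 : d ≠ 0 := fun h ↦ hd (h ▸ IsSquare.zero)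
  let g : Kˣ →* (QuadraticAlgebra K d 0)ˣ :=
    Units.map (algebraMap K (QuadraticAlgebra K d 0)).toMonoidHom
  have hnorm : (Subgroup.square (QuadraticAlgebra K d 0)ˣ ⊔ g.range).index * (quadNorms d).index =
      (Subgroup.square Kˣ).index := by
    rw [← comap_norm_square hd0, Subgroup.index_comap]
    exact Subgroup.relIndex_mul_index (square_le_quadNorms d)
  have hsup : ((Subgroup.square (QuadraticAlgebra K d 0)ˣ).comap g).index *
      (Subgroup.square (QuadraticAlgebra K d 0)ˣ ⊔ g.range).index =
        (Subgroup.square (QuadraticAlgebra K d 0)ˣ).index := by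
    rw [Subgroup.index_comap, ← Subgroup.relIndex_sup_left, Subgroup.relIndex_mul_index le_sup_left]
  have hcomap : 2 * ((Subgroup.square (QuadraticAlgebra K d 0)ˣ).comap g).index =
      (Subgroup.square Kˣ).index := by
    rw [← relIndex_comap_algebraMap_square hd]
    refine Subgroup.relIndex_mul_index ?_
    rintro _ ⟨u, rfl⟩
    exact ⟨g u, map_mul g u u⟩
  rw [sq, ← hsup]
  nth_rw 1 [← hcomap]
  rw [← hnorm]
  ring

lemma isSquare_mul_of_quadNorms_eq [NeZero (2 : K)]
    (hindex : ∀ c : K, ¬IsSquare c → (quadNorms c).index = 2) {d e : K} (hd : ¬IsSquare d)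
    (he : ¬IsSquare e) (h : quadNorms d = quadNorms e) : IsSquare (d * e) := by
  by_contra hde
  lift d to Kˣ using IsUnit.mk0 d fun h ↦ hd (h ▸ IsSquare.zero)
  lift e to Kˣ using IsUnit.mk0 e fun h ↦ he (h ▸ IsSquare.zero)
  have htop : quadNorms ((d * e : Kˣ) : K) = ⊤ := by
    refine eq_top_iff.2 fun u _ ↦ ?_
    by_cases hu : IsSquare (u : K)
    · exact square_le_quadNorms _ (isSquare_units_iff.2 hu)
    · have hdu : d ∈ quadNorms (u : K) ↔ u ∈ quadNorms (d : K) :=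
        ⟨mem_quadNorms_symm hd, mem_quadNorms_symm hu⟩
      have heu : e ∈ quadNorms (u : K) ↔ u ∈ quadNorms (e : K) :=
        ⟨mem_quadNorms_symm he, mem_quadNorms_symm hu⟩
      refine mem_quadNorms_symm hde ((Subgroup.mul_mem_iff_of_index_two (hindex u hu)).2 ?_)
      rw [hdu, heu, h]
  have h2 := hindex _ hde
  rw [← Units.val_mul, htop, Subgroup.index_top] at h2
  exact absurd h2 (by norm_num)

theorem quadNorms_algebraMap_eq_comap [NeZero (2 : K)]
    (hindex : ∀ c : K, ¬IsSquare c → (quadNorms c).index = 2) {d e : K} (hd : ¬IsSquare d)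
    (he : ¬IsSquare e) (hde : ¬IsSquare (d * e))
    (hindex' : (quadNorms (algebraMap K (QuadraticAlgebra K e 0) d)).index = 2) :
    quadNorms (algebraMap K (QuadraticAlgebra K e 0) d) = (quadNorms d).comap (Units.map norm) := by
  refine eq_of_le_of_prime_index (fun z hz ↦ map_norm_mem_quadNorms hz)
    (hindex' ▸ Nat.prime_two) fun htop ↦ hde ?_
  have hle : quadNorms e ≤ quadNorms d := by
    rintro _ ⟨z, rfl⟩
    exact (htop ▸ Subgroup.mem_top z : z ∈ (quadNorms d).comap (Units.map norm))
  exact isSquare_mul_of_quadNorms_eq hindex hd he (eq_of_le_of_prime_index hle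
    (hindex e he ▸ Nat.prime_two) fun h ↦ by simpa [h] using hindex d hd).symm

end QuadraticNorms

section LocalField

open QuadraticAlgebra
open scoped Pointwise

lemma neZero_two_quadraticAlgebra {R : Type*} [CommRing R] [NeZero (2 : R)] {a b : R} :
    NeZero (2 : QuadraticAlgebra R a b) :=
  ⟨fun h ↦ two_ne_zero' R (congrArg re h)⟩

lemma index_quadNorms_of_normed {K : Type*} [NontriviallyNormedField K] [IsUltrametricDist K]
    [ProperSpace K] [NeZero (2 : K)] {d : K} (hd : ¬IsSquare d) : (quadNorms d).index = 2 := by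
  have : Fact (∀ r : K, r ^ 2 ≠ d + 0 * r) := fact_sq_ne_of_not_isSquare hd
  let L := QuadraticAlgebra K d 0
  let : NontriviallyNormedField L := spectralNorm.nontriviallyNormedField K L
  let : NormedAlgebra K L := spectralNorm.normedAlgebra K L
  have : IsUltrametricDist L := .of_normedAlgebra K
  have : ProperSpace L := FiniteDimensional.proper K L
  have : NeZero (2 : L) := neZero_two_quadraticAlgebra
  have hsmul : (2 : L) • unitBall L = (2 : K) • unitBall L := by
    ext x
    simp only [AddSubgroup.mem_smul_pointwise_iff_exists, two_smul]
  have hL : (Subgroup.square Lˣ).index = 4 * ((2 : K) • unitBall K).relIndex (unitBall K) ^ 2 := by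
    rw [index_square, hsmul, relIndex_smul_unitBall two_ne_zero norm_two_le_one]
    congr 2
    exact finrank_eq_two d 0
  have h := index_square_sq_eq hd
  rw [hL, index_square] at h
  have h0 := relIndex_smul_unitBall_ne_zero (two_ne_zero' K)
  refine Nat.eq_of_mul_eq_mul_left (pow_pos (Nat.pos_of_ne_zero h0) 2) ?_
  linarith

theorem index_quadNorms (k : Type*) {K : Type*} [NontriviallyNormedField k] [IsUltrametricDist k]
    [ProperSpace k] [Field K] [Algebra k K] [FiniteDimensional k K] [NeZero (2 : K)] {d : K}
    (hd : ¬IsSquare d) : (quadNorms d).index = 2 := by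
  let : NontriviallyNormedField K := spectralNorm.nontriviallyNormedField k K
  let : NormedAlgebra k K := spectralNorm.normedAlgebra k K
  have : IsUltrametricDist K := .of_normedAlgebra k
  have : ProperSpace K := FiniteDimensional.proper k K
  exact index_quadNorms_of_normed hd

theorem mem_quadNorms_algebraMap_iff (k : Type*) {K : Type*} [NontriviallyNormedField k]
    [IsUltrametricDist k] [ProperSpace k] [Field K] [Algebra k K] [FiniteDimensional k K]
    [NeZero (2 : K)] {d e : K} (hd : ¬IsSquare d) (he : ¬IsSquare e) (hde : ¬IsSquare (d * e))
    {z : (QuadraticAlgebra K e 0)ˣ} :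
    z ∈ quadNorms (algebraMap K (QuadraticAlgebra K e 0) d) ↔ Units.map norm z ∈ quadNorms d := by
  have : Fact (∀ r : K, r ^ 2 ≠ e + 0 * r) := fact_sq_ne_of_not_isSquare he
  have : FiniteDimensional k (QuadraticAlgebra K e 0) := .trans k K _
  have : NeZero (2 : QuadraticAlgebra K e 0) := neZero_two_quadraticAlgebra
  rw [quadNorms_algebraMap_eq_comap (fun c ↦ index_quadNorms k) hd he hde
      (index_quadNorms k (not_isSquare_algebraMap hd he hde)),
    Subgroup.mem_comap]

end LocalField

section NormGroup

open QuadraticAlgebra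

lemma coe_mem_normGroup_iff {K L : Type*} [Field K] [Field L] [Algebra K L] {u : Kˣ} :
    (u : K) ∈ normGroup K L ↔ u ∈ (Units.map (Algebra.norm K : L →* K)).range :=
  ⟨fun ⟨t, ht, h⟩ ↦ ⟨Units.mk0 t ht, Units.ext h⟩,
    fun ⟨t, h⟩ ↦ ⟨t, t.ne_zero, congrArg Units.val h⟩⟩

lemma mem_normGroup_iff_of_mul_mem {K L : Type*} [Field K] [Field L] [Algebra K L] {x y : K}
    (hx : x ≠ 0) (hy : y ≠ 0) (h : x * y ∈ normGroup K L) :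
    x ∈ normGroup K L ↔ y ∈ normGroup K L := by
  lift x to Kˣ using hx.isUnit
  lift y to Kˣ using hy.isUnit
  rw [← Units.val_mul, coe_mem_normGroup_iff] at h
  rw [coe_mem_normGroup_iff, coe_mem_normGroup_iff]
  exact ⟨fun hx ↦ (Subgroup.mul_mem_cancel_left _ hx).1 h,
    fun hy ↦ (Subgroup.mul_mem_cancel_right _ hy).1 h⟩

lemma exists_algEquiv_omega_eq {K L : Type*} [Field K] [Field L] [Algebra K L] {d : K}
    (hd : ¬IsSquare d) (hL : finrank K L = 2) {s : L} (hs : s ^ 2 = algebraMap K L d) :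
    ∃ φ : QuadraticAlgebra K d 0 ≃ₐ[K] L, φ ω = s := by
  have : Fact (∀ r : K, r ^ 2 ≠ d + 0 * r) := fact_sq_ne_of_not_isSquare hd
  have : FiniteDimensional K L := .of_finrank_eq_succ hL
  let f : QuadraticAlgebra K d 0 →ₐ[K] L :=
    lift ⟨s, by rw [← sq, hs, zero_smul, add_zero, Algebra.algebraMap_eq_smul_one]⟩
  have hf : Function.Injective f := f.toRingHom.injective
  have hfs : Function.Surjective f.toLinearMap :=
    (LinearMap.injective_iff_surjective_of_finrank_eq_finrank
      ((finrank_eq_two d 0).trans hL.symm)).1 hf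
  exact ⟨.ofBijective f ⟨hf, hfs⟩, (by simp [f] : f ω = s)⟩

lemma algebraNorm_eq_norm {R : Type*} [CommRing R] {a b : R} (z : QuadraticAlgebra R a b) :
    Algebra.norm R z = norm z :=
  det_toLinearMap_eq_norm z

lemma coe_mem_normGroup_iff_mem_quadNorms {K L : Type*} [Field K] [Field L] [Algebra K L] {d : K}
    (hd : ¬IsSquare d) (hL : finrank K L = 2) (hLd : ∃ s : L, s ^ 2 = algebraMap K L d) {u : Kˣ} :
    (u : K) ∈ normGroup K L ↔ u ∈ quadNorms d := by
  obtain ⟨s, hs⟩ := hLd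
  obtain ⟨φ, -⟩ := exists_algEquiv_omega_eq hd hL hs
  rw [coe_mem_normGroup_iff, quadNorms, MonoidHom.mem_range, MonoidHom.mem_range,
    (Units.mapEquiv (φ : QuadraticAlgebra K d 0 ≃* L)).surjective.exists]
  refine exists_congr fun z ↦ ?_
  rw [Units.ext_iff, Units.ext_iff, Units.coe_map, Units.coe_map, ← algebraNorm_eq_norm]
  exact Eq.congr_left (Algebra.norm_eq_of_algEquiv φ z.val)

lemma map_mem_quadNorms_iff {R S : Type*} [CommRing R] [CommRing S] (φ : R ≃+* S) {d : R} {u : Rˣ} :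
    Units.map (φ : R →* S) u ∈ quadNorms (φ d) ↔ u ∈ quadNorms d := by
  simp_rw [mem_quadNorms, φ.surjective.exists]
  simp [← map_pow, ← map_mul, ← map_sub]

lemma norm_algebraMap_sub {K E : Type*} [Field K] [Field E] [Algebra K E] {e : K}
    (he : ¬IsSquare e) (hE : finrank K E = 2) {s : E} (hs : s ^ 2 = algebraMap K E e) (x : K) :
    Algebra.norm K (algebraMap K E x - s) = x ^ 2 - e := by
  obtain ⟨φ, rfl⟩ := exists_algEquiv_omega_eq he hE hs
  rw [← φ.commutes, ← map_sub, Algebra.norm_eq_of_algEquiv, algebraNorm_eq_norm, norm_def]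
  simp
  ring

theorem mem_normGroup_iff_norm_mem_normGroup (k : Type*) [NontriviallyNormedField k]
    [IsUltrametricDist k] [ProperSpace k] {K : Type*} [Field K] [Algebra k K]
    [FiniteDimensional k K] [NeZero (2 : K)] {d e : K} (hd : ¬IsSquare d) (he : ¬IsSquare e)
    (hde : ¬IsSquare (d * e)) {L E LE : Type*} [Field L] [Algebra K L] (hL : finrank K L = 2)
    (hLd : ∃ s : L, s ^ 2 = algebraMap K L d) [Field E] [Algebra K E] (hE : finrank K E = 2)
    (hEe : ∃ s : E, s ^ 2 = algebraMap K E e) [Field LE] [Algebra E LE] [Algebra K LE]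
    [IsScalarTower K E LE] (hLE : finrank E LE = 2) (hLEd : ∃ s : LE, s ^ 2 = algebraMap K LE d)
    {t : E} (ht : t ≠ 0) :
    t ∈ normGroup E LE ↔ Algebra.norm K t ∈ normGroup K L := by
  obtain ⟨s, hs⟩ := hEe
  obtain ⟨φ, -⟩ := exists_algEquiv_omega_eq he hE hs
  lift t to Eˣ using ht.isUnit
  obtain ⟨z, rfl⟩ := (Units.mapEquiv (φ : QuadraticAlgebra K e 0 ≃* E)).surjective t
  have hnorm : Algebra.norm K (φ z.val) = (Units.map norm z : Kˣ) :=
    (Algebra.norm_eq_of_algEquiv φ z.val).trans (algebraNorm_eq_norm z.val)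
  have hdE : ¬IsSquare (algebraMap K E d) := fun h ↦
    not_isSquare_algebraMap hd he hde (φ.symm.commutes d ▸ h.map φ.symm)
  rw [coe_mem_normGroup_iff_mem_quadNorms hdE hLE
    (hLEd.imp fun _ h ↦ h.trans (IsScalarTower.algebraMap_apply K E LE d))]
  calc Units.mapEquiv (φ : QuadraticAlgebra K e 0 ≃* E) z ∈ quadNorms (algebraMap K E d)
    _ ↔ z ∈ quadNorms (algebraMap K (QuadraticAlgebra K e 0) d) := by
      rw [← φ.commutes]
      exact map_mem_quadNorms_iff (φ : QuadraticAlgebra K e 0 ≃+* E)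
    _ ↔ Units.map norm z ∈ quadNorms d := mem_quadNorms_algebraMap_iff k hd he hde
    _ ↔ Algebra.norm K (φ z.val) ∈ normGroup K L := by
      rw [hnorm, coe_mem_normGroup_iff_mem_quadNorms hd hL hLd]

end NormGroup

theorem stmt_2_general (k : Type*) [NontriviallyNormedField k] [IsUltrametricDist k]
    [ProperSpace k] (K : Type*) [Field K] [Algebra k K] [FiniteDimensional k K] [NeZero (2 : K)]
    (d e : K) (hd : ¬IsSquare d) (he : ¬IsSquare e) (hde : ¬IsSquare (d * e))
    (L : Type*) [Field L] [Algebra K L] (hL2 : finrank K L = 2)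
    (hLd : ∃ s : L, s ^ 2 = algebraMap K L d)
    (E : Type*) [Field E] [Algebra K E] (hE2 : finrank K E = 2)
    (se : E) (hse : se ^ 2 = algebraMap K E e)
    (LE : Type*) [Field LE] [Algebra E LE] [Algebra K LE] [IsScalarTower K E LE]
    (hLE2 : finrank E LE = 2) (hLEd : ∃ s : LE, s ^ 2 = algebraMap K LE d) :
    (-e ∈ normGroup K L ↔ -se ∈ normGroup E LE) ∧
    (∀ x : K, x ≠ 0 → x * (x ^ 2 - e) ∈ normGroup K L →
      (x ∈ normGroup K L ↔ algebraMap K E x - se ∈ normGroup E LE)) := by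
  have hsub (x : K) : x ^ 2 - e ≠ 0 := fun h ↦ he ⟨x, by rw [← sq, sub_eq_zero.1 h]⟩
  have hnorm (x : K) : Algebra.norm K (algebraMap K E x - se) = x ^ 2 - e :=
    norm_algebraMap_sub he hE2 hse x
  have hmem (x : K) : algebraMap K E x - se ∈ normGroup E LE ↔ x ^ 2 - e ∈ normGroup K L := by
    have : FiniteDimensional K E := .of_finrank_eq_succ hE2
    rw [mem_normGroup_iff_norm_mem_normGroup k hd he hde hL2 hLd hE2 ⟨se, hse⟩ hLE2 hLEd
      (Algebra.norm_ne_zero_iff.1 ((hnorm x).trans_ne (hsub x))), hnorm x]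
  refine ⟨by simpa using (hmem 0).symm, fun x hx h ↦ ?_⟩
  rw [hmem, mem_normGroup_iff_of_mul_mem hx (hsub x) h]

/-- Lemma 2.2 (diagonal property): for non-isomorphic quadratic extensions `L = K(√d)` and
`E = K(√e)` of a `p`-adic field `K`, with compositum `LE` and a fixed square root `se = √e ∈ E`:
(a) `-e ∈ N_{L/K}(L*) ↔ -√e ∈ N_{LE/E}((LE)*)`; and
(b) for every `x ∈ K*` with `x(x² - e) ∈ N_{L/K}(L*)`,
`x ∈ N_{L/K}(L*) ↔ x - √e ∈ N_{LE/E}((LE)*)`. -/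
theorem stmt_2 (p : ℕ) [Fact p.Prime]
    (K : Type*) [Field K] [Algebra ℚ_[p] K] [FiniteDimensional ℚ_[p] K]
    (d e : K) (hd0 : d ≠ 0) (he0 : e ≠ 0)
    (hd : ¬ IsSquare d) (he : ¬ IsSquare e) (hde : ¬ IsSquare (d * e))
    (L : Type*) [Field L] [Algebra K L] (hL2 : finrank K L = 2)
    (hLd : ∃ s : L, s ^ 2 = algebraMap K L d)
    (E : Type*) [Field E] [Algebra K E] (hE2 : finrank K E = 2)
    (se : E) (hse : se ^ 2 = algebraMap K E e)
    (LE : Type*) [Field LE] [Algebra E LE] [Algebra K LE] [IsScalarTower K E LE]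
    (hLE2 : finrank E LE = 2)
    (hLEd : ∃ s : LE, s ^ 2 = algebraMap K LE d) :
    (-e ∈ normGroup K L ↔ -se ∈ normGroup E LE) ∧
    (∀ x : K, x ≠ 0 → x * (x ^ 2 - e) ∈ normGroup K L →
      (x ∈ normGroup K L ↔ algebraMap K E x - se ∈ normGroup E LE)) :=
  have : CharZero K := charZero_of_injective_algebraMap (algebraMap ℚ_[p] K).injective
  stmt_2_general ℚ_[p] K d e hd he hde L hL2 hLd E hE2 se hse LE hLE2 hLEd
end

section
/- Let p be an odd prime, K a finite extension of ℚ_p with normalized discrete valuation v_K, let e ∈ K* be a non-square with v_K(e) even (so E = K(√e) is unramified over K), and let L = K(√d) be a ramified quadratic extension of K. If −e ∈ N_{L/K}(L*), then −1 ∉ N_{L/K}(L*), and there exists α ∈ K* with α ∉ N_{L/K}(L*) and α² − e ∉ N_{L/K}(L*). -/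
open Module

/-- `v` is the normalized discrete valuation of the `p`-adic field `K`. -/
def IsNormalizedValuation (p : ℕ) [Fact p.Prime] {K : Type*} [Field K] [Algebra ℚ_[p] K]
    (v : K → ℤ) : Prop :=
  (∀ x y : K, x ≠ 0 → y ≠ 0 → v (x * y) = v x + v y) ∧
  (∀ x y : K, x ≠ 0 → y ≠ 0 → x + y ≠ 0 → min (v x) (v y) ≤ v (x + y)) ∧
  (∀ n : ℤ, ∃ x : K, x ≠ 0 ∧ v x = n) ∧
  0 < v (algebraMap ℚ_[p] K (p : ℚ_[p]))

/-!
The valuation `v_L` restricts to `2 v_K`, and in fact `v_L = v_K ∘ N_{L/K}`: since `1 + 𝔪` consists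
of squares and `d` is not a square, no cancellation occurs in `N(a + b√d) = a² - d b²`.
Ramification therefore makes `v_K(d)` odd, so one of the two terms `a²`, `d b²` strictly dominates,
and a norm of even valuation is a square. Hence `-e = f²`, and `-1` is neither a square nor a norm.
Among `1, 2, …, p - 1` there is a first non-square `n = β² + 1`, because `p - 1 ∈ -1 · (1 + 𝔪)`.
For `α = ± f β`, the element `α² - e = f² n` has even valuation and is not a square, so it is not a
norm; at most one of `± f β` is a norm, as their quotient is `-1`.

That `1 + 𝔪` consists of squares follows from the Galois invariance of the spectral norm `|·|`: if
`|x| < 1`, then one square root `s` of `1 + x` has `|s - 1| < 1`, while `|-s - 1| = |2| = 1`, so `s`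
has no conjugate other than itself. To pass from `|·|` to `v`, iterate `x ↦ √(1 + x) - 1`: each step
halves a negative `v(x)`, so `v` is nonnegative on the unit ball of `|·|`, which forces the
maximal ideal of `v` into that ball.
-/

section Valuation

variable {K Γ₀ : Type*} [Field K] [LinearOrderedCommGroupWithZero Γ₀] {v : Valuation K Γ₀}

/-- The square-root case of Hensel's lemma for `v`: every one-unit `1 + x`, where `v x < 1`, is a
square. It holds for Henselian `v` of residue characteristic different from `2`. -/
def HasSquareOneUnits (v : Valuation K Γ₀) : Prop :=
  ∀ x : K, v x < 1 → IsSquare (1 + x)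

theorem valuation_natCast_eq_one_of_coprime {m n : ℕ} (hmn : m.Coprime n) (hn : v n < 1) :
    v m = 1 := by
  have hint (a : ℤ) : v a ≤ 1 := intCast_mem v.integer a
  refine (show v m ≤ 1 from natCast_mem v.integer m).antisymm (le_of_not_gt fun hm ↦ ?_)
  obtain ⟨a, b, hab⟩ := Nat.isCoprime_iff_coprime.2 hmn
  have hone : (a * m + b * n : K) = 1 := mod_cast congrArg (Int.cast : ℤ → K) hab
  have hlt : v (a * m + b * n) < 1 := by
    apply v.map_add_lt <;> rw [map_mul]
    · exact mul_lt_one_of_nonneg_of_lt_one_right (hint a) zero_le hm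
    · exact mul_lt_one_of_nonneg_of_lt_one_right (hint b) zero_le hn
  simp [hone] at hlt

namespace HasSquareOneUnits

theorem isSquare_sq_add (hv : HasSquareOneUnits v) {x y : K} (h : v y < v x ^ 2) :
    IsSquare (x ^ 2 + y) := by
  have hx : x ≠ 0 := by
    rintro rfl
    simp at h
  have hfactor : x ^ 2 + y = x ^ 2 * (1 + y / x ^ 2) := by field_simp
  rw [hfactor]
  refine (IsSquare.sq x).mul (hv _ ?_)
  rw [map_div₀, map_pow]
  exact (div_lt_one₀ (pow_pos (v.pos_iff.2 hx) 2)).2 h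

theorem not_isSquare_natCast_sub_one (hv : HasSquareOneUnits v) {n : ℕ} (hn : n ≠ 0)
    (hvn : v n < 1) (hneg : ¬ IsSquare (-1 : K)) : ¬ IsSquare ((n - 1 : ℕ) : K) := by
  intro h
  have hunit : IsSquare (1 - n : K) := by
    simpa [sub_eq_add_neg] using hv (-n) (by rwa [v.map_neg])
  have hunit0 : (1 - n : K) ≠ 0 := by
    rw [← v.ne_zero_iff, v.map_one_sub_of_lt hvn]
    exact one_ne_zero
  have hquot : ((n - 1 : ℕ) : K) / (1 - n) = -1 := by
    rw [Nat.cast_pred (Nat.pos_of_ne_zero hn), ← neg_sub, neg_div, div_self hunit0]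
  exact hneg (hquot ▸ h.div hunit)

theorem exists_not_isSquare_sq_add_one (hv : HasSquareOneUnits v) {p : ℕ} (hp : p.Prime)
    (hvp : v p < 1) (hneg : ¬ IsSquare (-1 : K)) :
    ∃ β : K, ¬ IsSquare (β ^ 2 + 1) ∧ v (β ^ 2 + 1) = 1 := by
  classical
  have hlast := hv.not_isSquare_natCast_sub_one hp.ne_zero hvp hneg
  have hex : ∃ n : ℕ, ¬ IsSquare (n : K) := ⟨_, hlast⟩
  obtain ⟨m, hm⟩ : ∃ m, Nat.find hex = m + 1 :=
    Nat.exists_eq_succ_of_ne_zero fun h0 ↦ Nat.find_spec hex (by simp [h0])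
  obtain ⟨β, hβ⟩ : IsSquare (m : K) := not_not.1 (Nat.find_min hex (by omega))
  have hcast : ((m + 1 : ℕ) : K) = β ^ 2 + 1 := by rw [Nat.cast_succ, hβ, sq]
  have hlt : m + 1 < p := by
    have := Nat.find_min' hex hlast
    have := hp.pos
    omega
  refine ⟨β, hcast ▸ hm ▸ Nat.find_spec hex, hcast ▸ ?_⟩
  exact valuation_natCast_eq_one_of_coprime
    (Nat.coprime_of_lt_prime m.succ_ne_zero hlt hp).symm hvp

theorem valuation_sq_sub_mul_sq (hv : HasSquareOneUnits v) {d : K} (hd : ¬ IsSquare d) (a b : K) :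
    v (a ^ 2 - d * b ^ 2) = max (v a ^ 2) (v d * v b ^ 2) := by
  have hva : v (a ^ 2) = v a ^ 2 := map_pow v a 2
  have hvb : v (d * b ^ 2) = v d * v b ^ 2 := by rw [map_mul, map_pow]
  rw [← hva, ← hvb]
  refine (v.map_sub _ _).eq_or_lt.resolve_right fun hlt ↦ ?_
  have heq : v (a ^ 2) = v (d * b ^ 2) := by
    by_contra hne
    rw [sub_eq_add_neg, v.map_add_of_distinct_val (by rwa [v.map_neg]), v.map_neg] at hlt
    exact lt_irrefl _ hlt
  rw [← heq, max_self] at hlt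
  have hb : b ≠ 0 := by
    rintro rfl
    simp at hlt
  have hsq : IsSquare (d * b ^ 2) := by
    have := hv.isSquare_sq_add (x := a) (y := -(a ^ 2 - d * b ^ 2)) (by rwa [v.map_neg, ← hva])
    simpa using this
  exact hd (by simpa [hb] using hsq.div (IsSquare.sq b))

end HasSquareOneUnits

end Valuation

section Norm

variable {K L : Type*} [Field K] [Field L] [Algebra K L]

theorem div_mem_normGroup {x y : K} (hx : x ∈ normGroup K L) (hy : y ∈ normGroup K L) :
    x / y ∈ normGroup K L := by
  obtain ⟨s, hs, rfl⟩ := hx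
  obtain ⟨t, ht, rfl⟩ := hy
  have hnorm0 : Algebra.norm K t ≠ 0 := (ht.isUnit.map (Algebra.norm K)).ne_zero
  refine ⟨s / t, div_ne_zero hs ht, eq_div_of_mul_eq hnorm0 ?_⟩
  rw [← map_mul, div_mul_cancel₀ s ht]

theorem exists_eq_add_mul_sqrt_and_norm_eq {d : K} (hd : ¬ IsSquare d) (hL : finrank K L = 2)
    {s : L} (hs : s ^ 2 = algebraMap K L d) (t : L) :
    ∃ a b : K, t = algebraMap K L a + algebraMap K L b * s ∧
      Algebra.norm K t = a ^ 2 - d * b ^ 2 := by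
  have : Fact (∀ r : K, r ^ 2 ≠ d + 0 * r) :=
    ⟨fun r hr ↦ hd ⟨r, by linear_combination -hr⟩⟩
  let φ : QuadraticAlgebra K d 0 →ₐ[K] L :=
    QuadraticAlgebra.lift ⟨s, by simp [← sq, hs, Algebra.algebraMap_eq_smul_one]⟩
  have : FiniteDimensional K L := .of_finrank_pos (by omega)
  have hfinrank : finrank K (QuadraticAlgebra K d 0) = finrank K L :=
    (QuadraticAlgebra.finrank_eq_two d 0).trans hL.symm
  have hinj : Function.Injective φ.toLinearMap := φ.toRingHom.injective
  have hφ : Function.Bijective φ :=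
    ⟨hinj, (LinearMap.injective_iff_surjective_of_finrank_eq_finrank hfinrank).1 hinj⟩
  obtain ⟨z, rfl⟩ := hφ.2 t
  refine ⟨z.re, z.im, by simp [φ, Algebra.smul_def], ?_⟩
  calc Algebra.norm K (φ z) = Algebra.norm K z :=
        Algebra.norm_eq_of_algEquiv (AlgEquiv.ofBijective φ hφ) z
    _ = z.norm := QuadraticAlgebra.det_toLinearMap_eq_norm z
    _ = z.re ^ 2 - d * z.im ^ 2 := by rw [QuadraticAlgebra.norm_def]; ring

end Norm

section Ramified

variable {K L Γ₀ : Type*} [Field K] [Field L] [Algebra K L] [LinearOrderedCommGroupWithZero Γ₀]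
  {v : Valuation K Γ₀} {d : K} {s : L}

namespace HasSquareOneUnits

theorem valuation_eq_valuation_norm (hv : HasSquareOneUnits v) (hd : ¬ IsSquare d)
    (hL : finrank K L = 2) (hs : s ^ 2 = algebraMap K L d) {w : Valuation L Γ₀}
    (hw : ∀ x : K, w (algebraMap K L x) = v x ^ 2) (t : L) : w t = v (Algebra.norm K t) := by
  obtain ⟨a, b, rfl, hnorm⟩ := exists_eq_add_mul_sqrt_and_norm_eq hd hL hs t
  rw [hnorm]
  set N := a ^ 2 - d * b ^ 2 with hN
  set u := algebraMap K L a
  set r := algebraMap K L b * s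
  have hws : w s = v d := by
    have : w s ^ 2 = v d ^ 2 := by rw [← map_pow, hs, hw]
    exact (pow_left_inj₀ zero_le zero_le two_ne_zero).1 this
  have hmax : max (w u) (w r) = v N := by
    rw [hv.valuation_sq_sub_mul_sq hd, map_mul, hw, hw, hws, mul_comm]
  have hadd : w (u + r) ≤ v N := hmax ▸ w.map_add u r
  have hsub : w (u - r) ≤ v N := hmax ▸ w.map_sub u r
  have hprod : (u + r) * (u - r) = algebraMap K L N := by
    rw [hN, map_sub, map_mul, map_pow, map_pow, ← hs]
    ring
  have hmul : w (u + r) * w (u - r) = v N * v N := by rw [← map_mul, hprod, hw, sq]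
  refine hadd.eq_of_not_lt fun hlt ↦ hmul.not_lt ?_
  exact mul_lt_mul_of_lt_of_le_of_nonneg_of_pos hlt hsub zero_le (zero_le.trans_lt hlt)

theorem not_isSquare_valuation_of_ramified (hv : HasSquareOneUnits v) (hd : ¬ IsSquare d)
    (hL : finrank K L = 2) (hs : s ^ 2 = algebraMap K L d) {w : Valuation L Γ₀}
    (hw : ∀ x : K, w (algebraMap K L x) = v x ^ 2) (hram : ∃ t : L, ¬ IsSquare (w t)) :
    ¬ IsSquare (v d) := by
  intro hvd
  obtain ⟨t, ht⟩ := hram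
  obtain ⟨a, b, -, hnorm⟩ := exists_eq_add_mul_sqrt_and_norm_eq hd hL hs t
  rw [hv.valuation_eq_valuation_norm hd hL hs hw, hnorm, hv.valuation_sq_sub_mul_sq hd] at ht
  rcases max_choice (v a ^ 2) (v d * v b ^ 2) with h | h <;> rw [h] at ht
  · exact ht (IsSquare.sq _)
  · exact ht (hvd.mul (IsSquare.sq _))

theorem isSquare_of_mem_normGroup (hv : HasSquareOneUnits v) (hvd : ¬ IsSquare (v d))
    (hL : finrank K L = 2) (hs : s ^ 2 = algebraMap K L d) {x : K} (hx : x ∈ normGroup K L)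
    (hvx : IsSquare (v x)) : IsSquare x := by
  have hd : ¬ IsSquare d := fun h ↦ hvd (h.map v)
  obtain ⟨t, -, rfl⟩ := hx
  obtain ⟨a, b, -, hnorm⟩ := exists_eq_add_mul_sqrt_and_norm_eq hd hL hs t
  rw [hnorm] at hvx ⊢
  rcases eq_or_ne b 0 with rfl | hb
  · simp [IsSquare.sq]
  rcases lt_or_ge (v d * v b ^ 2) (v a ^ 2) with hlt | hle
  · rw [sub_eq_add_neg]
    exact hv.isSquare_sq_add (by rwa [v.map_neg, map_mul, map_pow])
  · rw [hv.valuation_sq_sub_mul_sq hd, max_eq_right hle] at hvx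
    have hvb : v b ≠ 0 := v.ne_zero_iff.2 hb
    exact absurd (by simpa [hvb] using hvx.div (IsSquare.sq (v b))) hvd

end HasSquareOneUnits

end Ramified

section IsConjRoot

variable {K L : Type*} [Field K] [Field L] [Algebra K L] {s : L} {a : K}

theorem isConjRoot_neg_of_sq_eq_algebraMap (hs : s ^ 2 = algebraMap K L a)
    (hsK : s ∉ Set.range (algebraMap K L)) : IsConjRoot K s (-s) := by
  have hirr : Irreducible (Polynomial.X ^ 2 - Polynomial.C a : Polynomial K) := by
    refine X_pow_sub_C_irreducible_of_prime Nat.prime_two fun r hr ↦ hsK ?_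
    rcases sq_eq_sq_iff_eq_or_eq_neg.1 (hs.trans (by rw [← hr, map_pow])) with h | h
    · exact ⟨r, h.symm⟩
    · exact ⟨-r, by rw [map_neg, h]⟩
  have hmin (y : L) (hy : y ^ 2 = algebraMap K L a) :
      minpoly K y = Polynomial.X ^ 2 - Polynomial.C a :=
    (minpoly.eq_of_irreducible_of_monic hirr (by simp [hy])
      (Polynomial.monic_X_pow_sub_C a two_ne_zero)).symm
  rw [isConjRoot_def, hmin s hs, hmin (-s) (by rwa [neg_sq])]

end IsConjRoot

section SpectralNorm

open scoped WithZero

variable {k K : Type*} [NontriviallyNormedField k] [CompleteSpace k] [IsUltrametricDist k]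
  [Field K] [Algebra k K]

theorem spectralNorm_neg_sub_one_of_spectralNorm_sub_one_lt_one [Algebra.IsAlgebraic k K]
    (h2 : ‖(2 : k)‖ = 1) {s : K} (hs : spectralNorm k K (s - 1) < 1) :
    spectralNorm k K (-s - 1) = 1 := by
  let : NormedField K := spectralNorm.normedField k K
  have : IsUltrametricDist K :=
    IsUltrametricDist.isUltrametricDist_of_forall_norm_add_le_max_norm
      (isNonarchimedean_spectralNorm (K := k) (L := K))
  have hs : ‖s - 1‖ < 1 := hs
  have h2K : ‖(2 : K)‖ = 1 := by
    rw [← h2, ← spectralNorm_extends (L := K) (2 : k), map_ofNat]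
    rfl
  change ‖-s - 1‖ = 1
  rw [show -s - 1 = -(s - 1 + 2) by ring, norm_neg,
    IsUltrametricDist.norm_add_eq_max_of_norm_ne_norm (by rw [h2K]; exact hs.ne), h2K,
    max_eq_right hs.le]

theorem mem_range_algebraMap_of_sq_of_spectralNorm_sub_one_lt_one {L : Type*} [Field L]
    [Algebra k L] [Algebra K L] [IsScalarTower k K L] [Algebra.IsAlgebraic k L] [Normal K L]
    (h2 : ‖(2 : k)‖ = 1) {s : L} {a : K} (hs : s ^ 2 = algebraMap K L a)
    (hs1 : spectralNorm k L (s - 1) < 1) : s ∈ Set.range (algebraMap K L) := by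
  by_contra hsK
  obtain ⟨σ, hσ⟩ := (isConjRoot_neg_of_sq_eq_algebraMap hs hsK).symm.exists_algEquiv
  have hconj := spectralNorm_eq_of_equiv (σ.restrictScalars k) (s - 1)
  rw [AlgEquiv.restrictScalars_apply, map_sub, map_one, hσ,
    spectralNorm_neg_sub_one_of_spectralNorm_sub_one_lt_one h2 hs1] at hconj
  exact hs1.ne hconj

variable [Algebra.IsAlgebraic k K]

theorem exists_spectralNorm_lt_one_and_one_add_sq_eq (h2 : ‖(2 : k)‖ = 1) {x : K}
    (hx : spectralNorm k K x < 1) : ∃ t : K, spectralNorm k K t < 1 ∧ (1 + t) ^ 2 = 1 + x := by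
  let Ω := AlgebraicClosure K
  have : Algebra.IsAlgebraic k Ω := .trans k K Ω
  let : NormedField Ω := spectralNorm.normedField k Ω
  have hΩ (y : Ω) : ‖y‖ = spectralNorm k Ω y := rfl
  rw [spectralNorm.eq_of_tower (L := Ω), ← hΩ] at hx
  obtain ⟨s, hs, hs1⟩ : ∃ s : Ω, s ^ 2 = algebraMap K Ω (1 + x) ∧ ‖s - 1‖ < 1 := by
    obtain ⟨s, hs⟩ := IsAlgClosed.exists_pow_nat_eq (algebraMap K Ω (1 + x)) two_pos
    have hprod : (s - 1) * (-s - 1) = -algebraMap K Ω x := by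
      rw [map_add, map_one] at hs
      linear_combination -hs
    by_contra! hall
    have hone := one_le_mul_of_one_le_of_one_le (hall s hs) (hall (-s) (by rwa [neg_sq]))
    rw [← norm_mul, hprod, norm_neg] at hone
    exact hone.not_gt hx
  obtain ⟨r, rfl⟩ := mem_range_algebraMap_of_sq_of_spectralNorm_sub_one_lt_one h2 hs hs1
  refine ⟨r - 1, ?_, ?_⟩
  · rwa [spectralNorm.eq_of_tower (L := Ω), map_sub, map_one]
  · rw [add_sub_cancel]
    exact (algebraMap K Ω).injective (by rw [map_pow, hs])

theorem valuation_le_one_of_spectralNorm_lt_one (h2 : ‖(2 : k)‖ = 1) (v : Valuation K ℤᵐ⁰) {x : K}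
    (hx : spectralNorm k K x < 1) : v x ≤ 1 := by
  have hroot {y : K} (hy : spectralNorm k K y < 1) (hvy : 1 < v y) :
      ∃ t : K, spectralNorm k K t < 1 ∧ v t ^ 2 = v y := by
    obtain ⟨t, ht, hty⟩ := exists_spectralNorm_lt_one_and_one_add_sq_eq h2 hy
    have hsq : v (1 + t) ^ 2 = v y := by
      rw [← map_pow, hty, v.map_add_eq_of_lt_right (by rwa [map_one])]
    have hlt : 1 < v (1 + t) := (one_lt_pow_iff two_ne_zero).1 (hsq ▸ hvy)
    have hvt : v t = v (1 + t) := by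
      rw [← v.map_sub_eq_of_lt_left (x := 1 + t) (y := 1) (by rwa [map_one]), add_sub_cancel_left]
    exact ⟨t, ht, hvt ▸ hsq⟩
  have hlarge (n : ℕ) : ∀ y : K, spectralNorm k K y < 1 → 1 < v y → (n : ℤ) < (v y).log := by
    induction n with
    | zero =>
      intro y _ hvy
      simpa using (WithZero.lt_log_iff_exp_lt (zero_lt_one.trans hvy).ne').2 hvy
    | succ n ih =>
      intro y hy hvy
      obtain ⟨t, ht, hvt⟩ := hroot hy hvy
      have hlog := ih t ht ((one_lt_pow_iff two_ne_zero).1 (hvt ▸ hvy))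
      rw [← hvt, WithZero.log_pow, nsmul_eq_mul]
      push_cast
      omega
  by_contra! hvx
  have := hlarge (v x).log.toNat x hx hvx
  omega

theorem spectralNorm_lt_one_of_valuation_lt_one (h2 : ‖(2 : k)‖ = 1) (v : Valuation K ℤᵐ⁰) {x : K}
    (hx : v x < 1) : spectralNorm k K x < 1 := by
  let : NormedField K := spectralNorm.normedField k K
  by_contra hle
  have hxnorm : 1 ≤ ‖x‖ := not_lt.1 hle
  have hx0 : x ≠ 0 := by
    rintro rfl
    norm_num at hxnorm
  obtain ⟨c, hc0, hc1⟩ := NormedField.exists_norm_lt_one k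
  have hc : ‖algebraMap k K c‖ = ‖c‖ := spectralNorm_extends c
  have hbound (n : ℕ) : v (algebraMap k K c) ≤ v x ^ n := by
    have hsmall : ‖algebraMap k K c / x ^ n‖ < 1 := by
      rw [norm_div, norm_pow, hc]
      exact div_lt_one (by positivity) |>.2 (hc1.trans_le (one_le_pow₀ hxnorm))
    have := valuation_le_one_of_spectralNorm_lt_one h2 v hsmall
    rw [map_div₀, map_pow] at this
    exact (div_le_one₀ (pow_pos (v.pos_iff.2 hx0) n)).1 this
  have hvc : v (algebraMap k K c) ≠ 0 := by
    rw [v.ne_zero_iff, ← norm_ne_zero_iff, hc]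
    exact hc0.ne'
  obtain ⟨n, hn⟩ := exists_pow_lt₀ hx (Units.mk0 _ hvc)
  exact (hbound n).not_gt hn

theorem hasSquareOneUnits_of_norm_two_eq_one (h2 : ‖(2 : k)‖ = 1) (v : Valuation K ℤᵐ⁰) :
    HasSquareOneUnits v := by
  intro x hx
  have hnorm := spectralNorm_lt_one_of_valuation_lt_one h2 v hx
  obtain ⟨t, -, ht⟩ := exists_spectralNorm_lt_one_and_one_add_sq_eq h2 hnorm
  exact ht ▸ IsSquare.sq (1 + t)

end SpectralNorm

namespace IsNormalizedValuation

open scoped WithZero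

variable {p : ℕ} [Fact p.Prime] {K : Type*} [Field K] [Algebra ℚ_[p] K] {v : K → ℤ}

open Classical in
/-- The multiplicative valuation `x ↦ exp (-v x)` attached to an additive normalized valuation `v`.
The value at `0` is set to `0`, since `v 0` is a junk value. -/
noncomputable def toValuation (hv : IsNormalizedValuation p v) : Valuation K ℤᵐ⁰ where
  toFun x := if x = 0 then 0 else .exp (-v x)
  map_zero' := if_pos rfl
  map_one' := by
    have : v 1 = 0 := by simpa using hv.1 1 1 one_ne_zero one_ne_zero
    simp [this]
  map_mul' x y := by
    rcases eq_or_ne x 0 with rfl | hx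
    · simp
    rcases eq_or_ne y 0 with rfl | hy
    · simp
    simp [hx, hy, hv.1 x y hx hy, WithZero.exp_add, mul_comm]
  map_add_le_max' x y := by
    rcases eq_or_ne x 0 with rfl | hx
    · simp
    rcases eq_or_ne y 0 with rfl | hy
    · simp
    rcases eq_or_ne (x + y) 0 with hxy | hxy
    · simp [hxy]
    have := hv.2.1 x y hx hy hxy
    simp only [hx, hy, hxy, if_false, le_max_iff, WithZero.exp_le_exp]
    omega

theorem toValuation_apply (hv : IsNormalizedValuation p v) {x : K} (hx : x ≠ 0) :
    hv.toValuation x = .exp (-v x) :=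
  if_neg hx

theorem isSquare_toValuation_iff (hv : IsNormalizedValuation p v) {x : K} (hx : x ≠ 0) :
    IsSquare (hv.toValuation x) ↔ Even (v x) := by
  rw [hv.toValuation_apply hx]
  constructor
  · rintro ⟨a, ha⟩
    have hlog := congrArg WithZero.log ha
    have ha0 : a ≠ 0 := by
      rintro rfl
      simp at ha
    rw [WithZero.log_exp, WithZero.log_mul ha0 ha0] at hlog
    exact even_neg.1 ⟨_, hlog⟩
  · intro h
    obtain ⟨n, hn⟩ := h.neg
    exact ⟨.exp n, by rw [hn, WithZero.exp_add]⟩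

theorem toValuation_prime_lt_one (hv : IsNormalizedValuation p v) : hv.toValuation p < 1 := by
  have hpos := hv.2.2.2
  rw [map_natCast] at hpos
  have : CharZero K := charZero_of_injective_algebraMap (algebraMap ℚ_[p] K).injective
  have hp0 : (p : K) ≠ 0 := Nat.cast_ne_zero.2 (Fact.out : p.Prime).ne_zero
  rw [hv.toValuation_apply hp0, ← WithZero.exp_zero, WithZero.exp_lt_exp]
  omega

theorem exists_not_isSquare_toValuation (hv : IsNormalizedValuation p v) :
    ∃ x : K, ¬ IsSquare (hv.toValuation x) := by
  obtain ⟨x, hx, hvx⟩ := hv.2.2.1 1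
  exact ⟨x, by simp [hv.isSquare_toValuation_iff hx, hvx]⟩

theorem toValuation_algebraMap_eq_sq {L : Type*} [Field L] [Algebra ℚ_[p] L] [Algebra K L]
    {w : L → ℤ} (hv : IsNormalizedValuation p v) (hw : IsNormalizedValuation p w)
    (hram : ∀ x : K, x ≠ 0 → w (algebraMap K L x) = 2 * v x) (x : K) :
    hw.toValuation (algebraMap K L x) = hv.toValuation x ^ 2 := by
  rcases eq_or_ne x 0 with rfl | hx
  · simp
  rw [hv.toValuation_apply hx, hw.toValuation_apply (by simpa using hx), hram x hx,
    ← WithZero.exp_nsmul, nsmul_eq_mul, Nat.cast_ofNat, mul_neg]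

theorem hasSquareOneUnits_toValuation [Algebra.IsAlgebraic ℚ_[p] K]
    (hv : IsNormalizedValuation p v) (hp : p ≠ 2) : HasSquareOneUnits hv.toValuation := by
  have hcop : p.Coprime 2 := (Nat.coprime_primes Fact.out Nat.prime_two).2 hp
  exact hasSquareOneUnits_of_norm_two_eq_one (k := ℚ_[p])
    (by exact_mod_cast Padic.norm_natCast_eq_one_iff.2 hcop) _

end IsNormalizedValuation

theorem stmt_8_general {K L Γ₀ : Type*} [Field K] [Field L] [Algebra K L]
    [LinearOrderedCommGroupWithZero Γ₀] {v : Valuation K Γ₀} (hv : HasSquareOneUnits v)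
    {p : ℕ} (hp : p.Prime) (hvp : v p < 1) {e : K} (he : ¬ IsSquare e) (hve : IsSquare (v e))
    {d : K} (hd : ¬ IsSquare d) (hL : finrank K L = 2) {s : L} (hs : s ^ 2 = algebraMap K L d)
    {w : Valuation L Γ₀} (hw : ∀ x : K, w (algebraMap K L x) = v x ^ 2)
    (hram : ∃ t : L, ¬ IsSquare (w t)) (hne : -e ∈ normGroup K L) :
    (-1 : K) ∉ normGroup K L ∧
    ∃ α : K, α ≠ 0 ∧ α ∉ normGroup K L ∧ α ^ 2 - e ∉ normGroup K L := by
  have hvd := hv.not_isSquare_valuation_of_ramified hd hL hs hw hram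
  have hsq {x : K} (hx : x ∈ normGroup K L) (hvx : IsSquare (v x)) : IsSquare x :=
    hv.isSquare_of_mem_normGroup hvd hL hs hx hvx
  obtain ⟨f, hf⟩ := (hsq hne (by rwa [v.map_neg])).exists_sq
  have hf0 : f ≠ 0 := by
    rintro rfl
    have he0 : e = 0 := by simpa using hf
    exact he (he0 ▸ IsSquare.zero)
  have hneg : ¬ IsSquare (-1 : K) := fun h ↦ he <| by
    simpa [← hf] using h.mul (IsSquare.sq f)
  have hnegN : (-1 : K) ∉ normGroup K L := fun h ↦ hneg (hsq h (by simp))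
  obtain ⟨β, hβ, hvβ⟩ := hv.exists_not_isSquare_sq_add_one hp hvp hneg
  have hα0 : f * β ≠ 0 := mul_ne_zero hf0 (by rintro rfl; simp at hβ)
  have hα : (f * β) ^ 2 - e ∉ normGroup K L := fun h ↦ by
    have hfactor : (f * β) ^ 2 - e = (β ^ 2 + 1) * f ^ 2 := by linear_combination hf
    rw [hfactor] at h
    have hsquare := hsq h (by simp [hvβ, IsSquare.sq])
    exact hβ (by simpa [hf0] using hsquare.div (IsSquare.sq f))
  refine ⟨hnegN, ?_⟩
  by_cases hmem : f * β ∈ normGroup K L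
  · refine ⟨-(f * β), neg_ne_zero.2 hα0, fun h ↦ hnegN ?_, by rwa [neg_sq]⟩
    simpa [neg_div, hα0] using div_mem_normGroup h hmem
  · exact ⟨f * β, hα0, hmem, hα⟩

/-- Case (1) of the proof of Theorem 1.2: `p` an odd prime, `K` a `p`-adic field,
`e ∈ K*` a non-square of even valuation (so `E = K(√e)` is unramified), and
`L = K(√d)` a ramified quadratic extension of `K`. If `-e ∈ N_{L/K}(L*)`, then
`-1 ∉ N_{L/K}(L*)` and there exists `α ∈ K*` with `α ∉ N_{L/K}(L*)` and
`α² - e ∉ N_{L/K}(L*)`. -/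
theorem stmt_8 (p : ℕ) [Fact p.Prime] (hp : p ≠ 2)
    (K : Type*) [Field K] [Algebra ℚ_[p] K] [FiniteDimensional ℚ_[p] K]
    (vK : K → ℤ) (hvK : IsNormalizedValuation p vK)
    (e : K) (he0 : e ≠ 0) (he : ¬ IsSquare e) (hve : Even (vK e))
    (d : K) (hd0 : d ≠ 0) (hd : ¬ IsSquare d)
    (L : Type*) [Field L] [Algebra K L] [Algebra ℚ_[p] L] [IsScalarTower ℚ_[p] K L]
    (hL2 : finrank K L = 2)
    (hLd : ∃ s : L, s ^ 2 = algebraMap K L d)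
    (vL : L → ℤ) (hvL : IsNormalizedValuation p vL)
    (hram : ∀ x : K, x ≠ 0 → vL (algebraMap K L x) = 2 * vK x)
    (hne : -e ∈ normGroup K L) :
    (-1 : K) ∉ normGroup K L ∧
    ∃ α : K, α ≠ 0 ∧ α ∉ normGroup K L ∧ α ^ 2 - e ∉ normGroup K L := by
  obtain ⟨s, hs⟩ := hLd
  exact stmt_8_general (hvK.hasSquareOneUnits_toValuation hp) Fact.out
    hvK.toValuation_prime_lt_one he ((hvK.isSquare_toValuation_iff he0).2 hve)
    hd hL2 hs (hvK.toValuation_algebraMap_eq_sq hvL hram) hvL.exists_not_isSquare_toValuation hne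
end
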